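/- The z-refined identity for profile (2,2,1): the series G_{(2,2,1)}(z,q) := (zq;q)_∞ F_{(2,2,1)}(z,q) equals Σ_{n_1,n_2,n_3,n_4 ≥ 0} z^{n_1} q^(n_1^2+n_2^2+n_3^2+n_4^2-n_1n_2+n_2n_4)/(q;q)_{n_1} · [n_1 choose n_2]_q [n_1 choose n_4]_q [n_2 choose n_3]_q. -/

import Mathlib

/-!
Write `H_c(n)` for the generating function, by size, of cylindric partitions of profile `c` with all
parts at most `n`, and `E(z) = ∑ zⁿ / (q; q)_n`, so that `E(qz) = (1 - z) E(z)` and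
`(zq; q)_∞ E(qz) = 1`. Since `F_c(z, q) = (1 - z) ∑ H_c(n) zⁿ`, the identity says that `H_221(n)` is
the coefficient of `zⁿ` in `T(z) E(z)`, where `T` is the quadruple sum.

Removing the largest part `n + 1` of one of the three partitions changes the profile by moving one
unit to a neighbouring entry. Inclusion–exclusion over the three partitions gives the Corteel–Welsh
recurrences, which for the seven profiles of level `5` up to rotation form a closed system
(`CWSystem`, `cwSystem_cylH`). Such a system has at most one solution (`CWSystem.unique`), so it
suffices to exhibit seven series `G_c`, with `G_221 = T`, such that the coefficients of `G_c E`
satisfy it; for the `G_c` this means a system of `q`-difference equations in `z`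
(`coeff_eq_of_functional`).

The series `G_c` are combinations of the sums `T(a, b, c, d)`, obtained from the quadruple sum by
adding the linear form `a n₁ + b n₂ + c n₃ + d n₄` to the exponent of `q`; the substitution
`z ↦ qz` raises `a` by one. Four of the seven equations hold by construction. The discrepancies
`errA`, `errB`, `errC` of the other three (profiles `(4,1,0)`, `(3,1,1)`, `(2,2,1)`) are handled by
four families of contiguous relations `T_rel1`, …, `T_rel4` among the `T(a, b, c, d)`: explicit
linear combinations of them show that `errA` is invariant under `z ↦ qz`, that the increment of
`errB` is a multiple of `errA`, and that `errC` solves a second-order homogeneous equation. Together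
with their lowest coefficients this forces all three to vanish (`errA_eq`, `errB_eq`, `errC_eq`).
The contiguous relations are proved over a field in which `q` is nonzero and not a root of unity,
then transferred from the fraction field of `ℚ⟦q⟧` to `ℚ⟦q⟧`.
-/

open scoped Finset

/-- A cylindric partition with profile `c = (c₁, …, c_k)` (0-indexed): a `k`-tuple of
partitions `λ⁽ⁱ⁾` (antitone, eventually-zero sequences of naturals, 0-indexed) with
`λ⁽ⁱ⁾ⱼ ≥ λ⁽ⁱ⁺¹⁾_{j + c_{i+1}}` cyclically. -/
structure CylindricPartition (k : ℕ) [NeZero k] (c : Fin k → ℕ) where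
  part : Fin k → ℕ → ℕ
  antitone : ∀ i, Antitone (part i)
  finite_support : ∀ i, ∃ N, ∀ j, N ≤ j → part i j = 0
  cyl : ∀ i j, part (i + 1) (j + c (i + 1)) ≤ part i j

namespace CylindricPartition

variable {k : ℕ} [NeZero k] {c : Fin k → ℕ}

/-- The size `|Λ|`: the sum of all parts. -/
noncomputable def size (Λ : CylindricPartition k c) : ℕ :=
  ∑' (i : Fin k) (j : ℕ), Λ.part i j

/-- The largest part `max(Λ)`. -/
def maxPart (Λ : CylindricPartition k c) : ℕ :=
  Finset.univ.sup fun i => Λ.part i 0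

end CylindricPartition
noncomputable instance : TopologicalSpace (MvPowerSeries (Fin 2) ℚ) :=
  Pi.topologicalSpace (ι := Fin 2 →₀ ℕ) (Y := fun _ => ℚ)

/-- The formal variable `z`. -/
noncomputable def z : MvPowerSeries (Fin 2) ℚ := MvPowerSeries.X 0

/-- The formal variable `q`. -/
noncomputable def q : MvPowerSeries (Fin 2) ℚ := MvPowerSeries.X 1

/-- The two-variable generating function of cylindric partitions of profile `c`, evaluated at
an arbitrary first argument `Z`:  `F_c(Z, q) = Σ_Λ Z^{max(Λ)} q^{|Λ|}`. -/
noncomputable def cylGF (k : ℕ) [NeZero k] (c : Fin k → ℕ) (Z : MvPowerSeries (Fin 2) ℚ) :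
    MvPowerSeries (Fin 2) ℚ :=
  ∑' Λ : CylindricPartition k c, Z ^ Λ.maxPart * q ^ Λ.size

/-- `G_c(Z, q) := (Zq; q)_∞ F_c(Z, q)`. -/
noncomputable def cylG (k : ℕ) [NeZero k] (c : Fin k → ℕ) (Z : MvPowerSeries (Fin 2) ℚ) :
    MvPowerSeries (Fin 2) ℚ :=
  (∏' m : ℕ, (1 - Z * q ^ (m + 1))) * cylGF k c Z

/-- `(q; q)_n` inside `ℚ⟦z, q⟧`. -/
noncomputable def qPoch (n : ℕ) : MvPowerSeries (Fin 2) ℚ :=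
  ∏ m ∈ Finset.range n, (1 - q ^ (m + 1))

/-- The Gaussian binomial coefficient `[m choose k]_q`, zero unless `k ≤ m`. -/
noncomputable def qBinom (m k : ℕ) : MvPowerSeries (Fin 2) ℚ :=
  if k ≤ m then qPoch m * (qPoch k * qPoch (m - k))⁻¹ else 0

/-! ### Contiguous relations for the triple sums -/

noncomputable section Field

/-- The `q`-Pochhammer symbol `(q; q)_n` in a commutative ring. -/
def qp {R : Type*} [CommRing R] (q : R) (n : ℕ) : R := ∏ m ∈ Finset.range n, (1 - q ^ (m + 1))

theorem qp_succ {R : Type*} [CommRing R] (q : R) (n : ℕ) :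
    qp q (n + 1) = (1 - q ^ (n + 1)) * qp q n := by
  rw [qp, Finset.prod_range_succ, mul_comm]; rfl

variable {K : Type*} [Field K]

/-- `1 / (q; q)_k` for an integer index `k`, with value `0` for `k < 0`, so that summation ranges
need not be written out. -/
def iq (q : K) : ℤ → K
  | Int.ofNat n => (qp q n)⁻¹
  | Int.negSucc _ => 0

theorem iq_neg (q : K) {k : ℤ} (h : k < 0) : iq q k = 0 := by
  cases k with
  | ofNat n => exact absurd h (by simp)
  | negSucc n => rfl

theorem iq_natCast (q : K) (n : ℕ) : iq q n = (qp q n)⁻¹ := rfl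

theorem iq_rec (q : K) (hq : ∀ n : ℕ, 0 < n → q ^ n ≠ 1) (k : ℤ) :
    (1 - q ^ k) * iq q k = iq q (k - 1) := by
  cases k with
  | negSucc n => rw [iq_neg q (by omega), iq_neg q (by omega), mul_zero]
  | ofNat n =>
    cases n with
    | zero => rw [iq_neg q (k := _ - 1) (by simp)]; simp
    | succ n =>
      have e : Int.ofNat (n + 1) - 1 = (n : ℤ) := by simp
      rw [e, iq_natCast, Int.ofNat_eq_natCast, iq_natCast, zpow_natCast, qp_succ]
      have : (1 - q ^ (n + 1)) ≠ 0 := sub_ne_zero.2 (hq _ (Nat.succ_pos n)).symm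
      rw [mul_inv, ← mul_assoc, mul_inv_cancel₀ this, one_mul]

/-- The summand of index `v = (x, y, w)` in the coefficient of `zⁿ`, namely
`q ^ (n² + x² + y² + w² - nx + xw + an + bx + cy + dw)` times
`(q)_n / ((q)_{n-x} (q)_w (q)_{n-w} (q)_y (q)_{x-y})`. With `a = b = c = d = 0` this is the summand
of the quadruple sum at `(n₁, n₂, n₃, n₄) = (n, x, y, w)`; the linear form `(a, b, c, d)` in the
exponent is what the contiguous relations move around. -/
def tm (q : K) (n : ℕ) (a b c d : ℤ) (v : ℤ × ℤ × ℤ) : K :=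
  q ^ ((n : ℤ) ^ 2 + v.1 ^ 2 + v.2.1 ^ 2 + v.2.2 ^ 2 - n * v.1 + v.1 * v.2.2
      + (a * n + b * v.1 + c * v.2.1 + d * v.2.2))
    * (qp q n * iq q (n - v.1) * iq q v.2.2 * iq q (n - v.2.2) * iq q v.2.1 * iq q (v.1 - v.2.1))

theorem tm_support (q : K) (n : ℕ) (a b c d : ℤ) :
    (Function.support (tm q n a b c d)) ⊆
      (↑((Finset.range (n + 1) ×ˢ Finset.range (n + 1) ×ˢ Finset.range (n + 1)).image
        fun u : ℕ × ℕ × ℕ => ((u.1 : ℤ), (u.2.1 : ℤ), (u.2.2 : ℤ))) : Set (ℤ × ℤ × ℤ)) := by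
  rintro ⟨x, y, w⟩ h
  have key : ∀ k : ℤ, iq q k ≠ 0 → 0 ≤ k := fun k hk => by
    by_contra hlt; exact hk (iq_neg q (by omega))
  simp only [Function.mem_support, tm, ne_eq, mul_eq_zero, not_or] at h
  obtain ⟨-, ⟨⟨⟨⟨⟨-, h1⟩, h2⟩, h3⟩, h4⟩, h5⟩⟩ := h
  have h1 := key _ h1
  have h2 := key _ h2
  have h3 := key _ h3
  have h4 := key _ h4
  have h5 := key _ h5
  simp only [Finset.coe_image, Set.mem_image, Finset.mem_coe, Finset.mem_product, Finset.mem_range]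
  refine ⟨(x.toNat, y.toNat, w.toNat), ?_, ?_⟩
  · simp only; omega
  · simp only [Prod.mk.injEq]; omega

theorem tm_finite (q : K) (n : ℕ) (a b c d : ℤ) :
    (Function.support (tm q n a b c d)).Finite :=
  (Finset.finite_toSet _).subset (tm_support q n a b c d)

/-- The sum of `tm` over all `(x, y, w)`; the support is finite because `iq` vanishes at negative
indices. -/
def Tc (q : K) (a b c d : ℤ) (n : ℕ) : K := ∑ᶠ v, tm q n a b c d v

theorem Tc_eq_sum (q : K) (a b c d : ℤ) (n : ℕ) :
    Tc q a b c d n = ∑ u ∈ Finset.range (n + 1) ×ˢ Finset.range (n + 1) ×ˢ Finset.range (n + 1),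
      tm q n a b c d ((u.1 : ℤ), (u.2.1 : ℤ), (u.2.2 : ℤ)) := by
  rw [Tc, finsum_eq_sum_of_support_subset _ (tm_support q n a b c d), Finset.sum_image]
  rintro ⟨x, y, w⟩ - ⟨x', y', w'⟩ - h
  simpa using h

/-- Sums over `ℤ³` are invariant under translation, so a termwise relation between summands
translated by `e` gives a relation between the sums. -/
theorem finsum_shift {f g F G : ℤ × ℤ × ℤ → K} (hf : f.support.Finite)
    (hg : g.support.Finite) (hF : F.support.Finite) (hG : G.support.Finite) (r : K)
    (e : ℤ × ℤ × ℤ) (h : ∀ v, f (v + e) - g (v + e) = r * (F v - G v)) :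
    ∑ᶠ v, f v - ∑ᶠ v, g v = r * (∑ᶠ v, F v - ∑ᶠ v, G v) := by
  rw [← finsum_sub_distrib hf hg, ← finsum_sub_distrib hF hG, mul_finsum,
    ← finsum_comp_equiv (Equiv.addRight e)]
  exact finsum_congr h

theorem finsum_lin {f₁ f₂ f₃ f₄ F G : ℤ × ℤ × ℤ → K} (h₁ : f₁.support.Finite)
    (h₂ : f₂.support.Finite) (h₃ : f₃.support.Finite) (h₄ : f₄.support.Finite)
    (hF : F.support.Finite) (hG : G.support.Finite) (r s : K)
    (h : ∀ v, f₁ v - f₂ v - (f₃ v - f₄ v) = r * (F v - s * G v)) :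
    ∑ᶠ v, f₁ v - ∑ᶠ v, f₂ v - (∑ᶠ v, f₃ v - ∑ᶠ v, f₄ v)
      = r * (∑ᶠ v, F v - s * ∑ᶠ v, G v) := by
  have hsG : (Function.support fun v => s * G v).Finite :=
    hG.subset fun v hv hv0 => hv (by simp only [hv0, mul_zero])
  have h12 : (Function.support fun v => f₁ v - f₂ v).Finite :=
    (h₁.union h₂).subset (Function.support_sub _ _)
  have h34 : (Function.support fun v => f₃ v - f₄ v).Finite :=
    (h₃.union h₄).subset (Function.support_sub _ _)
  rw [mul_finsum G s, ← finsum_sub_distrib h₁ h₂, ← finsum_sub_distrib h₃ h₄,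
    ← finsum_sub_distrib hF hsG, ← finsum_sub_distrib h12 h34, mul_finsum]
  exact finsum_congr h

variable (q : K) (hq0 : q ≠ 0) (hq : ∀ n : ℕ, 0 < n → q ^ n ≠ 1)
include hq0 hq

/-- Contiguous relation from `(1 - q^w) / (q)_w = 1 / (q)_{w-1}` and the shift `w ↦ w + 1`. -/
theorem Tc_rel4 (a b c d : ℤ) (n : ℕ) :
    Tc q a b c d n - Tc q a b c (d + 1) n
      = q ^ (1 + d) * (Tc q a (b + 1) c (d + 2) n - Tc q (a + 1) (b + 1) c (d + 1) n) := by
  refine finsum_shift (tm_finite ..) (tm_finite ..) (tm_finite ..) (tm_finite ..) _ (0, 0, 1) ?_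
  rintro ⟨x, y, w⟩
  have h1 := iq_rec q hq (w + 1)
  have h2 := iq_rec q hq (n - w)
  rw [add_sub_cancel_right] at h1
  have e2 : (n : ℤ) - w - 1 = n - (w + 1) := by ring
  rw [e2] at h2
  simp only [tm, Prod.mk_add_mk, add_zero]
  rw [← h2, ← h1]
  set P := (n : ℤ) ^ 2 + x ^ 2 + y ^ 2 + (w + 1) ^ 2 - n * x + x * (w + 1)
      + (a * n + b * x + c * y + d * (w + 1)) with hP
  have e3 : (n : ℤ) ^ 2 + x ^ 2 + y ^ 2 + (w + 1) ^ 2 - n * x + x * (w + 1)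
      + (a * n + b * x + c * y + (d + 1) * (w + 1)) = P + (w + 1) := by rw [hP]; ring
  have e4 : (n : ℤ) ^ 2 + x ^ 2 + y ^ 2 + w ^ 2 - n * x + x * w
      + (a * n + (b + 1) * x + c * y + (d + 2) * w) = P - (1 + d) := by rw [hP]; ring
  have e5 : (n : ℤ) ^ 2 + x ^ 2 + y ^ 2 + w ^ 2 - n * x + x * w
      + ((a + 1) * n + (b + 1) * x + c * y + (d + 1) * w) = P - (1 + d) + (n - w) := by rw [hP]; ring
  rw [e3, e4, e5, zpow_add₀ hq0 P, zpow_add₀ hq0 (P - (1 + d)), zpow_sub₀ hq0 P]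
  have := zpow_ne_zero (1 + d) hq0
  field_simp

/-- Contiguous relation from `(1 - q^y) / (q)_y = 1 / (q)_{y-1}` and the shift `y ↦ y + 1`. -/
theorem Tc_rel3 (a b c d : ℤ) (n : ℕ) :
    Tc q a b c d n - Tc q a b (c + 1) d n
      = q ^ (1 + c) * (Tc q a b (c + 2) d n - Tc q a (b + 1) (c + 1) d n) := by
  refine finsum_shift (tm_finite ..) (tm_finite ..) (tm_finite ..) (tm_finite ..) _ (0, 1, 0) ?_
  rintro ⟨x, y, w⟩
  have h1 := iq_rec q hq (y + 1)
  have h2 := iq_rec q hq (x - y)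
  rw [add_sub_cancel_right] at h1
  have e2 : x - y - 1 = x - (y + 1) := by ring
  rw [e2] at h2
  simp only [tm, Prod.mk_add_mk, add_zero]
  rw [← h2, ← h1]
  set P := (n : ℤ) ^ 2 + x ^ 2 + (y + 1) ^ 2 + w ^ 2 - n * x + x * w
      + (a * n + b * x + c * (y + 1) + d * w) with hP
  have e3 : (n : ℤ) ^ 2 + x ^ 2 + (y + 1) ^ 2 + w ^ 2 - n * x + x * w
      + (a * n + b * x + (c + 1) * (y + 1) + d * w) = P + (y + 1) := by rw [hP]; ring
  have e4 : (n : ℤ) ^ 2 + x ^ 2 + y ^ 2 + w ^ 2 - n * x + x * w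
      + (a * n + b * x + (c + 2) * y + d * w) = P - (1 + c) := by rw [hP]; ring
  have e5 : (n : ℤ) ^ 2 + x ^ 2 + y ^ 2 + w ^ 2 - n * x + x * w
      + (a * n + (b + 1) * x + (c + 1) * y + d * w) = P - (1 + c) + (x - y) := by rw [hP]; ring
  rw [e3, e4, e5, zpow_add₀ hq0 P, zpow_add₀ hq0 (P - (1 + c)), zpow_sub₀ hq0 P]
  have := zpow_ne_zero (1 + c) hq0
  field_simp

/-- Contiguous relation from `(1 - q^(x-y)) / (q)_{x-y} = 1 / (q)_{x-y-1}` and the shift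
`x ↦ x + 1`. -/
theorem Tc_rel2 (a b c d : ℤ) (n : ℕ) :
    Tc q a b c d n - Tc q a (b + 1) (c - 1) d n
      = q ^ (1 + b) * (Tc q (a - 1) (b + 2) c (d + 1) n - Tc q a (b + 1) c (d + 1) n) := by
  refine finsum_shift (tm_finite ..) (tm_finite ..) (tm_finite ..) (tm_finite ..) _ (1, 0, 0) ?_
  rintro ⟨x, y, w⟩
  have h1 := iq_rec q hq (x + 1 - y)
  have h2 := iq_rec q hq (n - x)
  have e1 : x + 1 - y - 1 = x - y := by ring
  have e2 : (n : ℤ) - x - 1 = n - (x + 1) := by ring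
  rw [e1] at h1
  rw [e2] at h2
  simp only [tm, Prod.mk_add_mk, add_zero]
  rw [← h2, ← h1]
  set P := (n : ℤ) ^ 2 + (x + 1) ^ 2 + y ^ 2 + w ^ 2 - n * (x + 1) + (x + 1) * w
      + (a * n + b * (x + 1) + c * y + d * w) with hP
  have e3 : (n : ℤ) ^ 2 + (x + 1) ^ 2 + y ^ 2 + w ^ 2 - n * (x + 1) + (x + 1) * w
      + (a * n + (b + 1) * (x + 1) + (c - 1) * y + d * w) = P + (x + 1 - y) := by rw [hP]; ring
  have e4 : (n : ℤ) ^ 2 + x ^ 2 + y ^ 2 + w ^ 2 - n * x + x * w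
      + ((a - 1) * n + (b + 2) * x + c * y + (d + 1) * w) = P - (1 + b) - (n - n) := by
    rw [hP]; ring
  have e5 : (n : ℤ) ^ 2 + x ^ 2 + y ^ 2 + w ^ 2 - n * x + x * w
      + (a * n + (b + 1) * x + c * y + (d + 1) * w) = P - (1 + b) + (n - x) := by rw [hP]; ring
  rw [e3, e4, e5, zpow_add₀ hq0 P, zpow_add₀ hq0 (P - (1 + b)), sub_self, sub_zero, zpow_sub₀ hq0 P]
  have := zpow_ne_zero (1 + b) hq0
  field_simp

/-- Contiguous relation from inserting the factor `(1 - q^(n-x)) (1 - q^(n-w))` and then lowering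
`n` by one. -/
theorem Tc_rel1 (a b c d : ℤ) (n : ℕ) :
    Tc q a b c d (n + 1) - Tc q (a + 1) (b - 1) c d (n + 1)
        - (Tc q (a + 1) b c (d - 1) (n + 1) - Tc q (a + 2) (b - 1) c (d - 1) (n + 1))
      = q ^ (1 + a) * (Tc q (a + 2) (b - 1) c d n - q * Tc q (a + 3) (b - 1) c d n) := by
  refine finsum_lin (tm_finite ..) (tm_finite ..) (tm_finite ..) (tm_finite ..) (tm_finite ..)
    (tm_finite ..) _ _ ?_
  rintro ⟨x, y, w⟩
  have h1 := iq_rec q hq ((n + 1 : ℕ) - x)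
  have h2 := iq_rec q hq ((n + 1 : ℕ) - w)
  have e1 : ((n + 1 : ℕ) : ℤ) - x - 1 = n - x := by push_cast; ring
  have e2 : ((n + 1 : ℕ) : ℤ) - w - 1 = n - w := by push_cast; ring
  rw [e1] at h1
  rw [e2] at h2
  simp only [tm]
  rw [← h2, ← h1, qp_succ]
  have hn : ((n + 1 : ℕ) : ℤ) = n + 1 := by push_cast; ring
  set I := iq q (((n + 1 : ℕ) : ℤ) - x)
  set J := iq q (((n + 1 : ℕ) : ℤ) - w)
  rw [hn]
  set P := ((n : ℤ) + 1) ^ 2 + x ^ 2 + y ^ 2 + w ^ 2 - (n + 1) * x + x * w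
    + (a * (n + 1) + b * x + c * y + d * w) with hP
  have e3 : ((n : ℤ) + 1) ^ 2 + x ^ 2 + y ^ 2 + w ^ 2 - (n + 1) * x + x * w
    + ((a + 1) * (n + 1) + (b - 1) * x + c * y + d * w) = P + (n + 1 - x) := by rw [hP]; ring
  have e4 : ((n : ℤ) + 1) ^ 2 + x ^ 2 + y ^ 2 + w ^ 2 - (n + 1) * x + x * w
    + ((a + 1) * (n + 1) + b * x + c * y + (d - 1) * w) = P + (n + 1 - w) := by rw [hP]; ring
  have e5 : ((n : ℤ) + 1) ^ 2 + x ^ 2 + y ^ 2 + w ^ 2 - (n + 1) * x + x * w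
    + ((a + 2) * (n + 1) + (b - 1) * x + c * y + (d - 1) * w)
      = P + (n + 1 - x) + (n + 1 - w) := by rw [hP]; ring
  have e6 : (n : ℤ) ^ 2 + x ^ 2 + y ^ 2 + w ^ 2 - n * x + x * w
    + ((a + 2) * n + (b - 1) * x + c * y + d * w) = P - (1 + a) := by rw [hP]; ring
  have e7 : (n : ℤ) ^ 2 + x ^ 2 + y ^ 2 + w ^ 2 - n * x + x * w
    + ((a + 3) * n + (b - 1) * x + c * y + d * w) = P - (1 + a) + (n : ℤ) := by rw [hP]; ring
  rw [e3, e4, e5, e6, e7, zpow_add₀ hq0 (P + _), zpow_add₀ hq0 P, zpow_add₀ hq0 P,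
    zpow_add₀ hq0 (P - _), zpow_sub₀ hq0 P, zpow_natCast]
  have := zpow_ne_zero (1 + a) hq0
  field_simp
  ring

end Field

/-! ### The power series `T` and its contiguous relations -/

noncomputable section Series

open PowerSeries

variable {K : Type*} [Field K]

/-- The power series in `z` with coefficients `Tc q a b c d n`. -/
def T (q : K) (a b c d : ℤ) : K⟦X⟧ := PowerSeries.mk (Tc q a b c d)

theorem rescale_C' {R : Type*} [CommRing R] (r s : R) : rescale r (C s) = C s := by
  ext n
  rw [coeff_rescale, coeff_C]
  split_ifs with h <;> simp [h]

theorem coeff_zero_T (q : K) (a b c d : ℤ) : constantCoeff (T q a b c d) = 1 := by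
  rw [← coeff_zero_eq_constantCoeff_apply, T, coeff_mk, Tc_eq_sum]
  have h0 : iq q 0 = 1 := by rw [← Nat.cast_zero, iq_natCast]; simp [qp]
  simp [tm, h0, qp]

theorem coeff_one_T (q : K) (hq : ∀ n : ℕ, 0 < n → q ^ n ≠ 1) (a b c d : ℕ) :
    coeff 1 (T q a b c d) = q ^ (1 + a) * (1 + q ^ (1 + d) + q ^ b + q ^ (1 + b + c)
      + q ^ (2 + b + d) + q ^ (3 + b + c + d)) / (1 - q) := by
  rw [T, coeff_mk, Tc_eq_sum]
  have h0 : iq q 0 = 1 := by rw [← Nat.cast_zero, iq_natCast]; simp [qp]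
  have h1 : iq q 1 = (1 - q)⁻¹ := by rw [← Nat.cast_one, iq_natCast]; simp [qp]
  have h2 : iq q (-1) = 0 := rfl
  have hq1 : 1 - q ≠ 0 := sub_ne_zero.2 (by simpa using (hq 1 one_pos).symm)
  simp only [Finset.sum_product, Finset.sum_range_succ, Finset.sum_range_zero, tm, h0, h1, h2,
    Nat.cast_zero, Nat.cast_one, zero_add, sub_zero, sub_self, zero_sub, mul_zero, add_zero,
    mul_one, one_mul, one_pow, ne_eq, OfNat.ofNat_ne_zero, not_false_eq_true, zero_pow, qp,
    Finset.prod_range_succ, Finset.prod_range_zero, pow_one]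
  have e : ∀ (m : ℤ) (k : ℕ), m = k → q ^ m = q ^ k := fun m k h => by rw [h, zpow_natCast]
  rw [e (1 + a) (1 + a) (by push_cast; ring),
    e (1 + 1 + (a + d)) (1 + a + (1 + d)) (by push_cast; ring),
    e (1 + 1 - 1 + (a + b)) (1 + a + b) (by push_cast; ring),
    e (1 + 1 + 1 - 1 + 1 + (a + b + d)) (1 + a + (2 + b + d)) (by push_cast; ring),
    e (1 + 1 + 1 - 1 + (a + b + c)) (1 + a + (1 + b + c)) (by push_cast; ring),
    e (1 + 1 + 1 + 1 - 1 + 1 + (a + b + c + d)) (1 + a + (3 + b + c + d)) (by push_cast; ring)]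
  field_simp
  ring

/-- The discrepancy in the functional equation of profile `(4,1,0)`, once the series of profiles
`(4,0,1)` and `(3,2,0)` are replaced by their expressions `G401`, `G320` below. -/
def errA (q : K) : K⟦X⟧ :=
  T q 0 1 1 1 + (-1 - C q * X) * T q 2 0 1 0 + (-C q ^ 2 * X) * T q 3 0 0 0 + (-C q ^ 2 * X) * T
  q 3 1 1 1 + (-C q ^ 3 * X) * T q 4 0 1 0 + (-C q ^ 4 * X) * T q 5 1 1 1

/-- The discrepancy in the functional equation of profile `(3,1,1)`. -/
def errB (q : K) : K⟦X⟧ :=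
  T q 0 0 1 0 - T q 1 0 0 0 - T q 1 1 1 1 + (-C q * X) * T q 2 0 0 0 + (1 - C q * X - C q ^ 3 * X
  ^ 2) * T q 3 0 1 0 + (C q ^ 3 * X - C q ^ 4 * X ^ 2) * T q 4 0 0 0 + (-C q ^ 4 * X ^ 2) * T q 4
  1 1 1 + (C q ^ 4 * X - C q ^ 5 * X ^ 2) * T q 5 0 1 0 + (C q ^ 5 * X - C q ^ 6 * X ^ 2) * T q 6
  1 1 1

/-- The discrepancy in the functional equation of profile `(2,2,1)`. -/
def errC (q : K) : K⟦X⟧ :=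
  T q 0 0 0 0 - T q 1 0 0 0 - T q 1 0 1 0 + (1 - C q * X) * T q 2 0 0 0 + (-C q * X) * T q 2 0 1
  0 + (-C q ^ 3 * X ^ 2) * T q 3 0 0 0 + (-C q ^ 4 * X ^ 2) * T q 4 0 1 0 + (-C q ^ 5 * X ^ 2) *
  T q 5 1 1 1

variable (q : K) (hq0 : q ≠ 0) (hq : ∀ n : ℕ, 0 < n → q ^ n ≠ 1)

include hq0 in
theorem rescale_T (a b c d : ℤ) : rescale q (T q a b c d) = T q (a + 1) b c d := by
  ext n
  rw [coeff_rescale, T, T, coeff_mk, coeff_mk, Tc, Tc, mul_finsum]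
  refine finsum_congr fun v => ?_
  rw [tm, tm, ← mul_assoc, ← zpow_natCast, ← zpow_add₀ hq0]
  congr 2
  ring

include hq0 hq

theorem T_rel4 (a b c d : ℤ) (k : ℕ) (hk : 1 + d = k) :
    T q a b c d - T q a b c (d + 1)
      = C q ^ k * (T q a (b + 1) c (d + 2) - T q (a + 1) (b + 1) c (d + 1)) := by
  ext n
  rw [← map_pow, coeff_C_mul]
  simp only [map_sub, T, coeff_mk]
  rw [Tc_rel4 q hq0 hq, hk, zpow_natCast]

theorem T_rel3 (a b c d : ℤ) (k : ℕ) (hk : 1 + c = k) :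
    T q a b c d - T q a b (c + 1) d
      = C q ^ k * (T q a b (c + 2) d - T q a (b + 1) (c + 1) d) := by
  ext n
  rw [← map_pow, coeff_C_mul]
  simp only [map_sub, T, coeff_mk]
  rw [Tc_rel3 q hq0 hq, hk, zpow_natCast]

theorem T_rel2 (a b c d : ℤ) (k : ℕ) (hk : 1 + b = k) :
    T q a b c d - T q a (b + 1) (c - 1) d
      = C q ^ k * (T q (a - 1) (b + 2) c (d + 1) - T q a (b + 1) c (d + 1)) := by
  ext n
  rw [← map_pow, coeff_C_mul]
  simp only [map_sub, T, coeff_mk]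
  rw [Tc_rel2 q hq0 hq, hk, zpow_natCast]

theorem T_rel1 (a b c d : ℤ) (k : ℕ) (hk : 1 + a = k) :
    T q a b c d - T q (a + 1) (b - 1) c d 
        - (T q (a + 1) b c (d - 1) - T q (a + 2) (b - 1) c (d - 1))
      = X * C q ^ k * (T q (a + 2) (b - 1) c d - C q * T q (a + 3) (b - 1) c d) := by
  ext n
  rw [← map_pow, mul_assoc]
  cases n with
  | zero => simp [coeff_zero_T]
  | succ n =>
    rw [coeff_succ_X_mul, coeff_C_mul, map_sub _ (T q (a + 2) (b - 1) c d), coeff_C_mul]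
    simp only [map_sub, T, coeff_mk]
    rw [Tc_rel1 q hq0 hq, hk, zpow_natCast]

/-! ### The three non-trivial functional equations -/

/-- A linear combination of contiguous relations shows that `errA` is invariant under `z ↦ qz`. -/
theorem errA_rec : errA q - rescale q (errA q) = 0 := by
  have r0 : T q 1 1 1 0 - T q 1 1 1 1 = C q ^ 1 * (T q 1 2 1 2 - T q 2 2 1 1) :=
    T_rel4 q hq0 hq 1 1 1 0 1 rfl
  have r1 : T q 2 0 1 0 - T q 2 0 1 1 = C q ^ 1 * (T q 2 1 1 2 - T q 3 1 1 1) :=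
    T_rel4 q hq0 hq 2 0 1 0 1 rfl
  have r2 : T q 3 0 0 0 - T q 3 0 0 1 = C q ^ 1 * (T q 3 1 0 2 - T q 4 1 0 1) :=
    T_rel4 q hq0 hq 3 0 0 0 1 rfl
  have r3 : T q 3 0 1 0 - T q 3 0 1 1 = C q ^ 1 * (T q 3 1 1 2 - T q 4 1 1 1) :=
    T_rel4 q hq0 hq 3 0 1 0 1 rfl
  have r4 : T q 4 0 0 0 - T q 4 0 0 1 = C q ^ 1 * (T q 4 1 0 2 - T q 5 1 0 1) :=
    T_rel4 q hq0 hq 4 0 0 0 1 rfl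
  have r5 : T q 4 0 1 0 - T q 4 0 1 1 = C q ^ 1 * (T q 4 1 1 2 - T q 5 1 1 1) :=
    T_rel4 q hq0 hq 4 0 1 0 1 rfl
  have r6 : T q 5 0 1 0 - T q 5 0 1 1 = C q ^ 1 * (T q 5 1 1 2 - T q 6 1 1 1) :=
    T_rel4 q hq0 hq 5 0 1 0 1 rfl
  have r7 : T q 2 1 (-1) 1 - T q 2 1 0 1 = C q ^ 0 * (T q 2 1 1 1 - T q 2 2 0 1) :=
    T_rel3 q hq0 hq 2 1 (-1) 1 0 rfl
  have r8 : T q 3 1 (-1) 0 - T q 3 1 0 0 = C q ^ 0 * (T q 3 1 1 0 - T q 3 2 0 0) :=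
    T_rel3 q hq0 hq 3 1 (-1) 0 0 rfl
  have r9 : T q 1 0 1 1 - T q 1 1 0 1 = C q ^ 1 * (T q 0 2 1 2 - T q 1 1 1 2) :=
    T_rel2 q hq0 hq 1 0 1 1 1 rfl
  have r10 : T q 2 0 0 1 - T q 2 1 (-1) 1 = C q ^ 1 * (T q 1 2 0 2 - T q 2 1 0 2) :=
    T_rel2 q hq0 hq 2 0 0 1 1 rfl
  have r11 : T q 2 0 1 0 - T q 2 1 0 0 = C q ^ 1 * (T q 1 2 1 1 - T q 2 1 1 1) :=
    T_rel2 q hq0 hq 2 0 1 0 1 rfl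
  have r12 : T q 2 0 1 1 - T q 2 1 0 1 = C q ^ 1 * (T q 1 2 1 2 - T q 2 1 1 2) :=
    T_rel2 q hq0 hq 2 0 1 1 1 rfl
  have r13 : T q 3 0 0 0 - T q 3 1 (-1) 0 = C q ^ 1 * (T q 2 2 0 1 - T q 3 1 0 1) :=
    T_rel2 q hq0 hq 3 0 0 0 1 rfl
  have r14 : T q 3 0 1 0 - T q 3 1 0 0 = C q ^ 1 * (T q 2 2 1 1 - T q 3 1 1 1) :=
    T_rel2 q hq0 hq 3 0 1 0 1 rfl
  have r15 : T q 3 0 1 1 - T q 3 1 0 1 = C q ^ 1 * (T q 2 2 1 2 - T q 3 1 1 2) :=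
    T_rel2 q hq0 hq 3 0 1 1 1 rfl
  have r16 : T q 4 0 1 0 - T q 4 1 0 0 = C q ^ 1 * (T q 3 2 1 1 - T q 4 1 1 1) :=
    T_rel2 q hq0 hq 4 0 1 0 1 rfl
  have r17 : T q 0 1 1 1 - T q 1 0 1 1 - (T q 1 1 1 0 - T q 2 0 1 0)
      = X * C q ^ 1 * (T q 2 0 1 1 - C q * T q 3 0 1 1) :=
    T_rel1 q hq0 hq 0 1 1 1 1 rfl
  have r18 : T q 0 2 1 2 - T q 1 1 1 2 - (T q 1 2 1 1 - T q 2 1 1 1)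
      = X * C q ^ 1 * (T q 2 1 1 2 - C q * T q 3 1 1 2) :=
    T_rel1 q hq0 hq 0 2 1 2 1 rfl
  have r19 : T q 1 1 0 1 - T q 2 0 0 1 - (T q 2 1 0 0 - T q 3 0 0 0)
      = X * C q ^ 2 * (T q 3 0 0 1 - C q * T q 4 0 0 1) :=
    T_rel1 q hq0 hq 1 1 0 1 2 rfl
  have r20 : T q 1 2 0 2 - T q 2 1 0 2 - (T q 2 2 0 1 - T q 3 1 0 1)
      = X * C q ^ 2 * (T q 3 1 0 2 - C q * T q 4 1 0 2) :=
    T_rel1 q hq0 hq 1 2 0 2 2 rfl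
  have r21 : T q 2 1 1 1 - T q 3 0 1 1 - (T q 3 1 1 0 - T q 4 0 1 0)
      = X * C q ^ 3 * (T q 4 0 1 1 - C q * T q 5 0 1 1) :=
    T_rel1 q hq0 hq 2 1 1 1 3 rfl
  have r22 : T q 2 2 0 1 - T q 3 1 0 1 - (T q 3 2 0 0 - T q 4 1 0 0)
      = X * C q ^ 3 * (T q 4 1 0 1 - C q * T q 5 1 0 1) :=
    T_rel1 q hq0 hq 2 2 0 1 3 rfl
  have r23 : T q 2 2 1 2 - T q 3 1 1 2 - (T q 3 2 1 1 - T q 4 1 1 1)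
      = X * C q ^ 3 * (T q 4 1 1 2 - C q * T q 5 1 1 2) :=
    T_rel1 q hq0 hq 2 2 1 2 3 rfl
  simp only [errA, map_add, map_sub, map_mul, map_neg, map_pow, map_one,
    rescale_T q hq0, rescale_X, rescale_C']
  norm_num only
  linear_combination
    (1) * r0 + (-1 - C q * X) * r1 + (-C q ^ 2 * X) * r2 + (C q ^ 2 * X) * r3 + (C q ^ 3 * X) *
    r4 + (-C q ^ 3 * X) * r5 + (C q ^ 4 * X) * r6 + (1) * r7 + (-1) * r8 + (1) * r9 + (1) * r10 +
    (-1) * r11 + (-1) * r12 + (-1) * r13 + (1) * r14 + (1) * r15 + (-1) * r16 + (1) * r17 + (C q)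
    * r18 + (1) * r19 + (C q) * r20 + (1) * r21 + (-1) * r22 + (C q) * r23

/-- The increment of `errB` under `z ↦ qz` is a multiple of `errA`, again by a linear combination of
contiguous relations. -/
theorem errB_rec : errB q - rescale q (errB q) = C q * X * (1 - C q) * errA q := by
  have r0 : T q 1 (-1) 1 (-1) - T q 1 (-1) 1 0 = C q ^ 0 * (T q 1 0 1 1 - T q 2 0 1 0) :=
    T_rel4 q hq0 hq 1 (-1) 1 (-1) 0 rfl
  have r1 : T q 1 0 0 (-1) - T q 1 0 0 0 = C q ^ 0 * (T q 1 1 0 1 - T q 2 1 0 0) :=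
    T_rel4 q hq0 hq 1 0 0 (-1) 0 rfl
  have r2 : T q 1 0 1 (-1) - T q 1 0 1 0 = C q ^ 0 * (T q 1 1 1 1 - T q 2 1 1 0) :=
    T_rel4 q hq0 hq 1 0 1 (-1) 0 rfl
  have r3 : T q 1 1 1 (-1) - T q 1 1 1 0 = C q ^ 0 * (T q 1 2 1 1 - T q 2 2 1 0) :=
    T_rel4 q hq0 hq 1 1 1 (-1) 0 rfl
  have r4 : T q 2 (-1) 0 (-1) - T q 2 (-1) 0 0 = C q ^ 0 * (T q 2 0 0 1 - T q 3 0 0 0) :=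
    T_rel4 q hq0 hq 2 (-1) 0 (-1) 0 rfl
  have r5 : T q 2 (-1) 1 (-1) - T q 2 (-1) 1 0 = C q ^ 0 * (T q 2 0 1 1 - T q 3 0 1 0) :=
    T_rel4 q hq0 hq 2 (-1) 1 (-1) 0 rfl
  have r6 : T q 2 0 0 (-1) - T q 2 0 0 0 = C q ^ 0 * (T q 2 1 0 1 - T q 3 1 0 0) :=
    T_rel4 q hq0 hq 2 0 0 (-1) 0 rfl
  have r7 : T q 2 1 1 (-1) - T q 2 1 1 0 = C q ^ 0 * (T q 2 2 1 1 - T q 3 2 1 0) :=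
    T_rel4 q hq0 hq 2 1 1 (-1) 0 rfl
  have r8 : T q 3 (-1) 0 (-1) - T q 3 (-1) 0 0 = C q ^ 0 * (T q 3 0 0 1 - T q 4 0 0 0) :=
    T_rel4 q hq0 hq 3 (-1) 0 (-1) 0 rfl
  have r9 : T q 3 (-1) 1 (-1) - T q 3 (-1) 1 0 = C q ^ 0 * (T q 3 0 1 1 - T q 4 0 1 0) :=
    T_rel4 q hq0 hq 3 (-1) 1 (-1) 0 rfl
  have r10 : T q 3 0 1 (-1) - T q 3 0 1 0 = C q ^ 0 * (T q 3 1 1 1 - T q 4 1 1 0) :=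
    T_rel4 q hq0 hq 3 0 1 (-1) 0 rfl
  have r11 : T q 3 1 1 (-1) - T q 3 1 1 0 = C q ^ 0 * (T q 3 2 1 1 - T q 4 2 1 0) :=
    T_rel4 q hq0 hq 3 1 1 (-1) 0 rfl
  have r12 : T q 4 (-1) 1 (-1) - T q 4 (-1) 1 0 = C q ^ 0 * (T q 4 0 1 1 - T q 5 0 1 0) :=
    T_rel4 q hq0 hq 4 (-1) 1 (-1) 0 rfl
  have r13 : T q 4 0 1 (-1) - T q 4 0 1 0 = C q ^ 0 * (T q 4 1 1 1 - T q 5 1 1 0) :=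
    T_rel4 q hq0 hq 4 0 1 (-1) 0 rfl
  have r14 : T q 4 1 1 (-1) - T q 4 1 1 0 = C q ^ 0 * (T q 4 2 1 1 - T q 5 2 1 0) :=
    T_rel4 q hq0 hq 4 1 1 (-1) 0 rfl
  have r15 : T q 5 0 1 (-1) - T q 5 0 1 0 = C q ^ 0 * (T q 5 1 1 1 - T q 6 1 1 0) :=
    T_rel4 q hq0 hq 5 0 1 (-1) 0 rfl
  have r16 : T q 2 0 (-1) (-1) - T q 2 0 0 (-1) = C q ^ 0 * (T q 2 0 1 (-1) - T q 2 1 0 (-1)) :=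
    T_rel3 q hq0 hq 2 0 (-1) (-1) 0 rfl
  have r17 : T q 2 0 (-1) 0 - T q 2 0 0 0 = C q ^ 0 * (T q 2 0 1 0 - T q 2 1 0 0) :=
    T_rel3 q hq0 hq 2 0 (-1) 0 0 rfl
  have r18 : T q 3 0 (-1) (-1) - T q 3 0 0 (-1) = C q ^ 0 * (T q 3 0 1 (-1) - T q 3 1 0 (-1)) :=
    T_rel3 q hq0 hq 3 0 (-1) (-1) 0 rfl
  have r19 : T q 3 0 (-1) 0 - T q 3 0 0 0 = C q ^ 0 * (T q 3 0 1 0 - T q 3 1 0 0) :=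
    T_rel3 q hq0 hq 3 0 (-1) 0 0 rfl
  have r20 : T q 1 (-1) 1 (-1) - T q 1 0 0 (-1) = C q ^ 0 * (T q 0 1 1 0 - T q 1 0 1 0) :=
    T_rel2 q hq0 hq 1 (-1) 1 (-1) 0 rfl
  have r21 : T q 1 (-1) 1 0 - T q 1 0 0 0 = C q ^ 0 * (T q 0 1 1 1 - T q 1 0 1 1) :=
    T_rel2 q hq0 hq 1 (-1) 1 0 0 rfl
  have r22 : T q 2 (-1) 0 (-1) - T q 2 0 (-1) (-1) = C q ^ 0 * (T q 1 1 0 0 - T q 2 0 0 0) :=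
    T_rel2 q hq0 hq 2 (-1) 0 (-1) 0 rfl
  have r23 : T q 2 (-1) 0 0 - T q 2 0 (-1) 0 = C q ^ 0 * (T q 1 1 0 1 - T q 2 0 0 1) :=
    T_rel2 q hq0 hq 2 (-1) 0 0 0 rfl
  have r24 : T q 2 (-1) 1 (-1) - T q 2 0 0 (-1) = C q ^ 0 * (T q 1 1 1 0 - T q 2 0 1 0) :=
    T_rel2 q hq0 hq 2 (-1) 1 (-1) 0 rfl
  have r25 : T q 3 (-1) 0 (-1) - T q 3 0 (-1) (-1) = C q ^ 0 * (T q 2 1 0 0 - T q 3 0 0 0) :=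
    T_rel2 q hq0 hq 3 (-1) 0 (-1) 0 rfl
  have r26 : T q 3 (-1) 0 0 - T q 3 0 (-1) 0 = C q ^ 0 * (T q 2 1 0 1 - T q 3 0 0 1) :=
    T_rel2 q hq0 hq 3 (-1) 0 0 0 rfl
  have r27 : T q 3 (-1) 1 (-1) - T q 3 0 0 (-1) = C q ^ 0 * (T q 2 1 1 0 - T q 3 0 1 0) :=
    T_rel2 q hq0 hq 3 (-1) 1 (-1) 0 rfl
  have r28 : T q 3 (-1) 1 0 - T q 3 0 0 0 = C q ^ 0 * (T q 2 1 1 1 - T q 3 0 1 1) :=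
    T_rel2 q hq0 hq 3 (-1) 1 0 0 rfl
  have r29 : T q 4 (-1) 1 (-1) - T q 4 0 0 (-1) = C q ^ 0 * (T q 3 1 1 0 - T q 4 0 1 0) :=
    T_rel2 q hq0 hq 4 (-1) 1 (-1) 0 rfl
  have r30 : T q 4 (-1) 1 0 - T q 4 0 0 0 = C q ^ 0 * (T q 3 1 1 1 - T q 4 0 1 1) :=
    T_rel2 q hq0 hq 4 (-1) 1 0 0 rfl
  have r31 : T q 0 0 1 0 - T q 1 (-1) 1 0 - (T q 1 0 1 (-1) - T q 2 (-1) 1 (-1))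
      = X * C q ^ 1 * (T q 2 (-1) 1 0 - C q * T q 3 (-1) 1 0) :=
    T_rel1 q hq0 hq 0 0 1 0 1 rfl
  have r32 : T q 0 1 1 0 - T q 1 0 1 0 - (T q 1 1 1 (-1) - T q 2 0 1 (-1))
      = X * C q ^ 1 * (T q 2 0 1 0 - C q * T q 3 0 1 0) :=
    T_rel1 q hq0 hq 0 1 1 0 1 rfl
  have r33 : T q 0 1 1 1 - T q 1 0 1 1 - (T q 1 1 1 0 - T q 2 0 1 0)
      = X * C q ^ 1 * (T q 2 0 1 1 - C q * T q 3 0 1 1) :=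
    T_rel1 q hq0 hq 0 1 1 1 1 rfl
  have r34 : T q 1 1 0 0 - T q 2 0 0 0 - (T q 2 1 0 (-1) - T q 3 0 0 (-1))
      = X * C q ^ 2 * (T q 3 0 0 0 - C q * T q 4 0 0 0) :=
    T_rel1 q hq0 hq 1 1 0 0 2 rfl
  have r35 : T q 1 1 1 0 - T q 2 0 1 0 - (T q 2 1 1 (-1) - T q 3 0 1 (-1))
      = X * C q ^ 2 * (T q 3 0 1 0 - C q * T q 4 0 1 0) :=
    T_rel1 q hq0 hq 1 1 1 0 2 rfl
  have r36 : T q 1 2 1 1 - T q 2 1 1 1 - (T q 2 2 1 0 - T q 3 1 1 0)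
      = X * C q ^ 2 * (T q 3 1 1 1 - C q * T q 4 1 1 1) :=
    T_rel1 q hq0 hq 1 2 1 1 2 rfl
  have r37 : T q 2 1 0 0 - T q 3 0 0 0 - (T q 3 1 0 (-1) - T q 4 0 0 (-1))
      = X * C q ^ 3 * (T q 4 0 0 0 - C q * T q 5 0 0 0) :=
    T_rel1 q hq0 hq 2 1 0 0 3 rfl
  have r38 : T q 2 1 1 0 - T q 3 0 1 0 - (T q 3 1 1 (-1) - T q 4 0 1 (-1))
      = X * C q ^ 3 * (T q 4 0 1 0 - C q * T q 5 0 1 0) :=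
    T_rel1 q hq0 hq 2 1 1 0 3 rfl
  have r39 : T q 2 2 1 1 - T q 3 1 1 1 - (T q 3 2 1 0 - T q 4 1 1 0)
      = X * C q ^ 3 * (T q 4 1 1 1 - C q * T q 5 1 1 1) :=
    T_rel1 q hq0 hq 2 2 1 1 3 rfl
  have r40 : T q 3 1 1 0 - T q 4 0 1 0 - (T q 4 1 1 (-1) - T q 5 0 1 (-1))
      = X * C q ^ 4 * (T q 5 0 1 0 - C q * T q 6 0 1 0) :=
    T_rel1 q hq0 hq 3 1 1 0 4 rfl
  have r41 : T q 3 2 1 1 - T q 4 1 1 1 - (T q 4 2 1 0 - T q 5 1 1 0)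
      = X * C q ^ 4 * (T q 5 1 1 1 - C q * T q 6 1 1 1) :=
    T_rel1 q hq0 hq 3 2 1 1 4 rfl
  have r42 : T q 4 2 1 1 - T q 5 1 1 1 - (T q 5 2 1 0 - T q 6 1 1 0)
      = X * C q ^ 5 * (T q 6 1 1 1 - C q * T q 7 1 1 1) :=
    T_rel1 q hq0 hq 4 2 1 1 5 rfl
  simp only [errA, errB, map_add, map_sub, map_mul, map_neg, map_pow, map_one,
    rescale_T q hq0, rescale_X, rescale_C']
  norm_num only
  linear_combination
    (C q * X - C q ^ 2 * X) * r0 + (-C q * X + C q ^ 2 * X) * r1 + (1) * r2 + (-C q * X + C q ^ 2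
    * X) * r3 + (C q * X - C q ^ 2 * X) * r4 + (-C q * X) * r5 + (-1 + C q ^ 2 * X) * r6 + (C q ^
    2 * X) * r7 + (1 - C q ^ 2 * X) * r8 + (-1 + C q * X) * r9 + (-1) * r10 + (-C q * X + C q ^ 2
    * X) * r11 + (1 - C q ^ 2 * X) * r12 + (C q * X - C q ^ 2 * X) * r13 + (-1 + C q ^ 2 * X) *
    r14 + (1 - C q ^ 2 * X) * r15 + (-C q * X + C q ^ 2 * X) * r16 + (C q * X - C q ^ 2 * X) *
    r17 + (-1 + C q ^ 2 * X) * r18 + (1 - C q ^ 2 * X) * r19 + (-C q * X + C q ^ 2 * X) * r20 +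
    (1 + C q * X - C q ^ 2 * X) * r21 + (-C q * X + C q ^ 2 * X) * r22 + (C q * X - C q ^ 2 * X)
    * r23 + (-1 + C q * X) * r24 + (-1 + C q ^ 2 * X) * r25 + (1 - C q ^ 2 * X) * r26 + (1 - C q
    * X) * r27 + (-1 + C q * X - C q ^ 2 * X) * r28 + (-1 + C q ^ 2 * X) * r29 + (1 - C q ^ 2 *
    X) * r30 + (1) * r31 + (-C q * X + C q ^ 2 * X) * r32 + (1) * r33 + (-C q * X + C q ^ 2 * X)
    * r34 + (C q ^ 2 * X) * r35 + (-C q * X + C q ^ 2 * X) * r36 + (-1 + C q ^ 2 * X) * r37 + (-C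
    q * X + C q ^ 2 * X) * r38 + (C q ^ 2 * X) * r39 + (-1 + C q ^ 2 * X) * r40 + (-C q * X + C q
    ^ 2 * X) * r41 + (-1 + C q ^ 2 * X) * r42

/-- A second-order `q`-difference equation for `errC`; its solution space is spanned by `1` and `z`,
so the two lowest coefficients decide whether `errC` vanishes. -/
theorem errC_rec : rescale q (rescale q (errC q)) - (1 + C q) * rescale q (errC q)
    + C q * errC q = 0 := by
  have r0 : T q 1 0 0 (-1) - T q 1 0 0 0 = C q ^ 0 * (T q 1 1 0 1 - T q 2 1 0 0) :=
    T_rel4 q hq0 hq 1 0 0 (-1) 0 rfl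
  have r1 : T q 2 (-1) 0 (-1) - T q 2 (-1) 0 0 = C q ^ 0 * (T q 2 0 0 1 - T q 3 0 0 0) :=
    T_rel4 q hq0 hq 2 (-1) 0 (-1) 0 rfl
  have r2 : T q 2 0 0 (-1) - T q 2 0 0 0 = C q ^ 0 * (T q 2 1 0 1 - T q 3 1 0 0) :=
    T_rel4 q hq0 hq 2 0 0 (-1) 0 rfl
  have r3 : T q 2 0 1 (-1) - T q 2 0 1 0 = C q ^ 0 * (T q 2 1 1 1 - T q 3 1 1 0) :=
    T_rel4 q hq0 hq 2 0 1 (-1) 0 rfl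
  have r4 : T q 3 (-1) 0 (-1) - T q 3 (-1) 0 0 = C q ^ 0 * (T q 3 0 0 1 - T q 4 0 0 0) :=
    T_rel4 q hq0 hq 3 (-1) 0 (-1) 0 rfl
  have r5 : T q 3 (-1) 1 (-1) - T q 3 (-1) 1 0 = C q ^ 0 * (T q 3 0 1 1 - T q 4 0 1 0) :=
    T_rel4 q hq0 hq 3 (-1) 1 (-1) 0 rfl
  have r6 : T q 3 0 0 (-1) - T q 3 0 0 0 = C q ^ 0 * (T q 3 1 0 1 - T q 4 1 0 0) :=
    T_rel4 q hq0 hq 3 0 0 (-1) 0 rfl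
  have r7 : T q 3 0 1 (-1) - T q 3 0 1 0 = C q ^ 0 * (T q 3 1 1 1 - T q 4 1 1 0) :=
    T_rel4 q hq0 hq 3 0 1 (-1) 0 rfl
  have r8 : T q 3 1 1 (-1) - T q 3 1 1 0 = C q ^ 0 * (T q 3 2 1 1 - T q 4 2 1 0) :=
    T_rel4 q hq0 hq 3 1 1 (-1) 0 rfl
  have r9 : T q 4 (-1) 1 (-1) - T q 4 (-1) 1 0 = C q ^ 0 * (T q 4 0 1 1 - T q 5 0 1 0) :=
    T_rel4 q hq0 hq 4 (-1) 1 (-1) 0 rfl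
  have r10 : T q 4 0 1 (-1) - T q 4 0 1 0 = C q ^ 0 * (T q 4 1 1 1 - T q 5 1 1 0) :=
    T_rel4 q hq0 hq 4 0 1 (-1) 0 rfl
  have r11 : T q 4 1 1 (-1) - T q 4 1 1 0 = C q ^ 0 * (T q 4 2 1 1 - T q 5 2 1 0) :=
    T_rel4 q hq0 hq 4 1 1 (-1) 0 rfl
  have r12 : T q 5 0 1 (-1) - T q 5 0 1 0 = C q ^ 0 * (T q 5 1 1 1 - T q 6 1 1 0) :=
    T_rel4 q hq0 hq 5 0 1 (-1) 0 rfl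
  have r13 : T q 1 0 (-1) 0 - T q 1 0 0 0 = C q ^ 0 * (T q 1 0 1 0 - T q 1 1 0 0) :=
    T_rel3 q hq0 hq 1 0 (-1) 0 0 rfl
  have r14 : T q 2 0 (-1) (-1) - T q 2 0 0 (-1) = C q ^ 0 * (T q 2 0 1 (-1) - T q 2 1 0 (-1)) :=
    T_rel3 q hq0 hq 2 0 (-1) (-1) 0 rfl
  have r15 : T q 2 0 (-1) 0 - T q 2 0 0 0 = C q ^ 0 * (T q 2 0 1 0 - T q 2 1 0 0) :=
    T_rel3 q hq0 hq 2 0 (-1) 0 0 rfl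
  have r16 : T q 3 0 (-1) (-1) - T q 3 0 0 (-1) = C q ^ 0 * (T q 3 0 1 (-1) - T q 3 1 0 (-1)) :=
    T_rel3 q hq0 hq 3 0 (-1) (-1) 0 rfl
  have r17 : T q 3 0 (-1) 0 - T q 3 0 0 0 = C q ^ 0 * (T q 3 0 1 0 - T q 3 1 0 0) :=
    T_rel3 q hq0 hq 3 0 (-1) 0 0 rfl
  have r18 : T q 4 0 (-1) 0 - T q 4 0 0 0 = C q ^ 0 * (T q 4 0 1 0 - T q 4 1 0 0) :=
    T_rel3 q hq0 hq 4 0 (-1) 0 0 rfl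
  have r19 : T q 1 (-1) 0 0 - T q 1 0 (-1) 0 = C q ^ 0 * (T q 0 1 0 1 - T q 1 0 0 1) :=
    T_rel2 q hq0 hq 1 (-1) 0 0 0 rfl
  have r20 : T q 2 (-1) 0 (-1) - T q 2 0 (-1) (-1) = C q ^ 0 * (T q 1 1 0 0 - T q 2 0 0 0) :=
    T_rel2 q hq0 hq 2 (-1) 0 (-1) 0 rfl
  have r21 : T q 2 (-1) 0 0 - T q 2 0 (-1) 0 = C q ^ 0 * (T q 1 1 0 1 - T q 2 0 0 1) :=
    T_rel2 q hq0 hq 2 (-1) 0 0 0 rfl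
  have r22 : T q 3 (-1) 0 (-1) - T q 3 0 (-1) (-1) = C q ^ 0 * (T q 2 1 0 0 - T q 3 0 0 0) :=
    T_rel2 q hq0 hq 3 (-1) 0 (-1) 0 rfl
  have r23 : T q 3 (-1) 0 0 - T q 3 0 (-1) 0 = C q ^ 0 * (T q 2 1 0 1 - T q 3 0 0 1) :=
    T_rel2 q hq0 hq 3 (-1) 0 0 0 rfl
  have r24 : T q 3 (-1) 1 (-1) - T q 3 0 0 (-1) = C q ^ 0 * (T q 2 1 1 0 - T q 3 0 1 0) :=
    T_rel2 q hq0 hq 3 (-1) 1 (-1) 0 rfl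
  have r25 : T q 3 (-1) 1 0 - T q 3 0 0 0 = C q ^ 0 * (T q 2 1 1 1 - T q 3 0 1 1) :=
    T_rel2 q hq0 hq 3 (-1) 1 0 0 rfl
  have r26 : T q 4 (-1) 0 0 - T q 4 0 (-1) 0 = C q ^ 0 * (T q 3 1 0 1 - T q 4 0 0 1) :=
    T_rel2 q hq0 hq 4 (-1) 0 0 0 rfl
  have r27 : T q 4 (-1) 1 (-1) - T q 4 0 0 (-1) = C q ^ 0 * (T q 3 1 1 0 - T q 4 0 1 0) :=
    T_rel2 q hq0 hq 4 (-1) 1 (-1) 0 rfl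
  have r28 : T q 4 (-1) 1 0 - T q 4 0 0 0 = C q ^ 0 * (T q 3 1 1 1 - T q 4 0 1 1) :=
    T_rel2 q hq0 hq 4 (-1) 1 0 0 rfl
  have r29 : T q 0 0 0 0 - T q 1 (-1) 0 0 - (T q 1 0 0 (-1) - T q 2 (-1) 0 (-1))
      = X * C q ^ 1 * (T q 2 (-1) 0 0 - C q * T q 3 (-1) 0 0) :=
    T_rel1 q hq0 hq 0 0 0 0 1 rfl
  have r30 : T q 0 1 0 1 - T q 1 0 0 1 - (T q 1 1 0 0 - T q 2 0 0 0)
      = X * C q ^ 1 * (T q 2 0 0 1 - C q * T q 3 0 0 1) :=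
    T_rel1 q hq0 hq 0 1 0 1 1 rfl
  have r31 : T q 1 0 0 0 - T q 2 (-1) 0 0 - (T q 2 0 0 (-1) - T q 3 (-1) 0 (-1))
      = X * C q ^ 2 * (T q 3 (-1) 0 0 - C q * T q 4 (-1) 0 0) :=
    T_rel1 q hq0 hq 1 0 0 0 2 rfl
  have r32 : T q 1 1 0 0 - T q 2 0 0 0 - (T q 2 1 0 (-1) - T q 3 0 0 (-1))
      = X * C q ^ 2 * (T q 3 0 0 0 - C q * T q 4 0 0 0) :=
    T_rel1 q hq0 hq 1 1 0 0 2 rfl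
  have r33 : T q 1 1 0 1 - T q 2 0 0 1 - (T q 2 1 0 0 - T q 3 0 0 0)
      = X * C q ^ 2 * (T q 3 0 0 1 - C q * T q 4 0 0 1) :=
    T_rel1 q hq0 hq 1 1 0 1 2 rfl
  have r34 : T q 2 1 0 0 - T q 3 0 0 0 - (T q 3 1 0 (-1) - T q 4 0 0 (-1))
      = X * C q ^ 3 * (T q 4 0 0 0 - C q * T q 5 0 0 0) :=
    T_rel1 q hq0 hq 2 1 0 0 3 rfl
  have r35 : T q 2 1 1 0 - T q 3 0 1 0 - (T q 3 1 1 (-1) - T q 4 0 1 (-1))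
      = X * C q ^ 3 * (T q 4 0 1 0 - C q * T q 5 0 1 0) :=
    T_rel1 q hq0 hq 2 1 1 0 3 rfl
  have r36 : T q 3 1 1 0 - T q 4 0 1 0 - (T q 4 1 1 (-1) - T q 5 0 1 (-1))
      = X * C q ^ 4 * (T q 5 0 1 0 - C q * T q 6 0 1 0) :=
    T_rel1 q hq0 hq 3 1 1 0 4 rfl
  have r37 : T q 3 2 1 1 - T q 4 1 1 1 - (T q 4 2 1 0 - T q 5 1 1 0)
      = X * C q ^ 4 * (T q 5 1 1 1 - C q * T q 6 1 1 1) :=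
    T_rel1 q hq0 hq 3 2 1 1 4 rfl
  have r38 : T q 4 2 1 1 - T q 5 1 1 1 - (T q 5 2 1 0 - T q 6 1 1 0)
      = X * C q ^ 5 * (T q 6 1 1 1 - C q * T q 7 1 1 1) :=
    T_rel1 q hq0 hq 4 2 1 1 5 rfl
  simp only [errC, map_add, map_sub, map_mul, map_neg, map_pow, map_one,
    rescale_T q hq0, rescale_X, rescale_C']
  norm_num only
  linear_combination
    (C q) * r0 + (-C q - C q ^ 2 * X) * r1 + (-1 + C q ^ 2 * X) * r2 + (C q ^ 2 * X) * r3 + (1 +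
    C q ^ 3 * X) * r4 + (-C q ^ 2 * X) * r5 + (-C q ^ 3 * X) * r6 + (-C q ^ 3 * X) * r7 + (C q ^
    2 * X) * r8 + (C q ^ 3 * X) * r9 + (-C q ^ 2 * X) * r10 + (-C q ^ 3 * X) * r11 + (C q ^ 3 *
    X) * r12 + (C q) * r13 + (C q ^ 2 * X) * r14 + (-1 - C q) * r15 + (-C q ^ 3 * X) * r16 + (1 -
    C q ^ 2 * X) * r17 + (C q ^ 3 * X) * r18 + (C q) * r19 + (C q ^ 2 * X) * r20 + (-1 - C q) *
    r21 + (-C q ^ 3 * X) * r22 + (1 - C q ^ 2 * X) * r23 + (C q ^ 2 * X) * r24 + (-C q ^ 2 * X) *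
    r25 + (C q ^ 3 * X) * r26 + (-C q ^ 3 * X) * r27 + (C q ^ 3 * X) * r28 + (C q) * r29 + (C q)
    * r30 + (-1) * r31 + (C q ^ 2 * X) * r32 + (-1) * r33 + (-C q ^ 3 * X) * r34 + (C q ^ 2 * X)
    * r35 + (-C q ^ 3 * X) * r36 + (C q ^ 2 * X) * r37 + (-C q ^ 3 * X) * r38

omit hq0 in
/-- A power series in `z` invariant under `z ↦ qz` is constant. -/
theorem eq_zero_of_rescale {f : K⟦X⟧} (h : f - rescale q f = 0) (h0 : constantCoeff f = 0) :
    f = 0 := by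
  ext n
  cases n with
  | zero => simpa using h0
  | succ n =>
    have := congrArg (coeff (n + 1)) h
    rw [map_sub, coeff_rescale, map_zero] at this
    have h1 : (1 - q ^ (n + 1)) * coeff (n + 1) f = 0 := by linear_combination this
    simpa using (mul_eq_zero.1 h1).resolve_left (sub_ne_zero.2 (hq _ (Nat.succ_pos n)).symm)

/-- A solution of the equation `f(q²z) - (1 + q) f(qz) + q f(z) = 0` with vanishing coefficients of
`1` and `z` is zero. -/
theorem eq_zero_of_rescale₂ {f : K⟦X⟧}
    (h : rescale q (rescale q f) - (1 + C q) * rescale q f + C q * f = 0)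
    (h0 : coeff 0 f = 0) (h1 : coeff 1 f = 0) : f = 0 := by
  ext n
  match n with
  | 0 => simpa using h0
  | 1 => simpa using h1
  | n + 2 =>
    have := congrArg (coeff (n + 2)) h
    rw [add_mul, one_mul] at this
    simp only [map_add, map_sub, coeff_rescale, map_zero, coeff_C_mul] at this
    have h2 : (1 - q ^ (n + 2)) * ((1 - q ^ (n + 1)) * (q * coeff (n + 2) f)) = 0 := by
      linear_combination this
    have h3 := (mul_eq_zero.1 h2).resolve_left (sub_ne_zero.2 (hq _ (Nat.succ_pos _)).symm)
    have h4 := (mul_eq_zero.1 h3).resolve_left (sub_ne_zero.2 (hq _ (Nat.succ_pos _)).symm)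
    simpa using (mul_eq_zero.1 h4).resolve_left hq0

theorem errA_eq : errA q = 0 := by
  refine eq_zero_of_rescale q hq (errA_rec q hq0 hq) ?_
  simp [errA, coeff_zero_T]

theorem errB_eq : errB q = 0 := by
  refine eq_zero_of_rescale q hq ?_ ?_
  · rw [errB_rec q hq0 hq, errA_eq q hq0 hq, mul_zero]
  · simp [errB, coeff_zero_T]

theorem errC_eq : errC q = 0 := by
  refine eq_zero_of_rescale₂ q hq0 hq (errC_rec q hq0 hq) ?_ ?_
  · simp [errC, coeff_zero_T]
  · have hq1 : 1 - q ≠ 0 := sub_ne_zero.2 (by simpa using (hq 1 one_pos).symm)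
    have e : errC q = T q 0 0 0 0 - T q 1 0 0 0 - T q 1 0 1 0 + T q 2 0 0 0
        - C q * (X * (T q 2 0 0 0 + T q 2 0 1 0))
        - X ^ 2 * (C q ^ 3 * T q 3 0 0 0 + C q ^ 4 * T q 4 0 1 0 + C q ^ 5 * T q 5 1 1 1) := by
      rw [errC]; ring
    have hX : ∀ f : K⟦X⟧, coeff 1 (X * f) = constantCoeff f := fun f => by
      rw [show (1 : ℕ) = 0 + 1 from rfl, coeff_succ_X_mul, coeff_zero_eq_constantCoeff_apply]
    have t0 := coeff_one_T q hq 0 0 0 0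
    have t1 := coeff_one_T q hq 1 0 0 0
    have t2 := coeff_one_T q hq 1 0 1 0
    have t3 := coeff_one_T q hq 2 0 0 0
    push_cast at t0 t1 t2 t3
    rw [e]
    simp only [map_sub, map_add, coeff_C_mul, hX, coeff_X_pow_mul', coeff_zero_T, t0, t1, t2, t3]
    norm_num
    field_simp
    ring

end Series

/-! ### Transfer to `ℚ⟦q⟧⟦z⟧` -/

noncomputable section Transfer

open PowerSeries

/-- The coefficient ring `ℚ⟦q⟧`; series in `z` live in `QS⟦X⟧`. -/
abbrev QS : Type := PowerSeries ℚ

theorem qp_ne_zero (n : ℕ) : constantCoeff (qp (X : QS) n) ≠ 0 := by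
  simp [qp, map_prod]

/-- The series `T` at the generic `q`, with coefficients in `ℚ⟦q⟧` instead of a field and with
nonnegative parameters. The sum is over `u = (x, y, w)` with `y ≤ x ≤ n` and `w ≤ n`; the truncated
subtraction in the exponent is harmless since `n * x ≤ n ^ 2`. -/
def TA (a b c d : ℕ) : QS⟦X⟧ := PowerSeries.mk fun n =>
  ∑ u ∈ Finset.range (n + 1) ×ˢ Finset.range (n + 1) ×ˢ Finset.range (n + 1),
    if u.2.1 ≤ u.1 then
      (X : QS) ^ (n ^ 2 + u.1 ^ 2 + u.2.1 ^ 2 + u.2.2 ^ 2 + u.1 * u.2.2 - n * u.1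
          + (a * n + b * u.1 + c * u.2.1 + d * u.2.2))
        * (qp X n * (qp X (n - u.1))⁻¹ * (qp X u.2.2)⁻¹ * (qp X (n - u.2.2))⁻¹ * (qp X u.2.1)⁻¹
          * (qp X (u.1 - u.2.1))⁻¹)
    else 0

local notation "FF" => FractionRing QS
local notation "qF" => algebraMap QS (FractionRing QS) X

theorem qF_ne_zero : qF ≠ 0 := by
  rw [Ne, FaithfulSMul.algebraMap_eq_zero_iff]
  exact X_ne_zero

theorem qF_pow_ne_one (n : ℕ) (hn : 0 < n) : qF ^ n ≠ 1 := by
  rw [← map_pow, Ne, FaithfulSMul.algebraMap_eq_one_iff]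
  intro h
  have := congrArg constantCoeff h
  simp [hn.ne'] at this

theorem map_qp (n : ℕ) : algebraMap QS FF (qp X n) = qp qF n := by
  simp [qp, map_prod]

theorem map_qp_inv (n : ℕ) : algebraMap QS FF (qp X n)⁻¹ = (qp qF n)⁻¹ := by
  refine eq_inv_of_mul_eq_one_left ?_
  rw [← map_qp, ← map_mul, PowerSeries.inv_mul_cancel _ (qp_ne_zero n), map_one]

theorem map_TA (a b c d : ℕ) : map (algebraMap QS FF) (TA a b c d) = T qF a b c d := by
  ext n
  rw [coeff_map, TA, T, coeff_mk, coeff_mk, Tc_eq_sum, map_sum]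
  refine Finset.sum_congr rfl ?_
  rintro ⟨x, y, w⟩ hu
  simp only [Finset.mem_product, Finset.mem_range] at hu
  obtain ⟨hx, hy, hw⟩ := hu
  have hsub : ∀ i j : ℕ, j ≤ i → iq qF ((i : ℤ) - j) = (qp qF (i - j))⁻¹ := fun i j h => by
    rw [← Nat.cast_sub h, iq_natCast]
  split_ifs with hyx
  · simp only at hyx
    simp only [tm, map_mul, map_pow, map_qp, map_qp_inv, hsub n x (by omega),
      hsub n w (by omega), hsub x y hyx, iq_natCast]
    congr 1
    rw [← zpow_natCast]
    congr 1
    have : n * x ≤ n ^ 2 + x ^ 2 + y ^ 2 + w ^ 2 + x * w := by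
      have : n * x ≤ n * n := Nat.mul_le_mul_left _ (by omega)
      nlinarith
    push_cast [Nat.cast_sub this]
    ring
  · simp only at hyx
    rw [map_zero, tm, iq_neg qF (k := (x : ℤ) - y) (by omega)]
    simp

theorem mapF_injective : Function.Injective (map (algebraMap QS FF)) :=
  map_injective _ (IsFractionRing.injective QS FF)

theorem rescale_TA (a b c d : ℕ) : rescale (X : QS) (TA a b c d) = TA (a + 1) b c d := by
  ext1 n
  rw [coeff_rescale, TA, TA, coeff_mk, coeff_mk, Finset.mul_sum]
  refine Finset.sum_congr rfl fun u _ => ?_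
  split_ifs
  · rw [← mul_assoc, ← pow_add]
    congr 2
    ring
  · rw [mul_zero]

theorem constantCoeff_TA (a b c d : ℕ) : constantCoeff (TA a b c d) = 1 := by
  apply IsFractionRing.injective QS FF
  have := congrArg constantCoeff (map_TA a b c d)
  rw [coeff_zero_T] at this
  rw [map_one, ← this, ← coeff_zero_eq_constantCoeff_apply, ← coeff_zero_eq_constantCoeff_apply,
    coeff_map]

theorem errA_TA :
    TA 0 1 1 1 + (-1 - C X * X) * TA 2 0 1 0 + (-C X ^ 2 * X) * TA 3 0 0 0 + (-C X ^ 2 * X) *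
      TA 3 1 1 1 + (-C X ^ 3 * X) * TA 4 0 1 0 + (-C X ^ 4 * X) * TA 5 1 1 1 = 0 := by
  apply mapF_injective
  simp only [map_add, map_sub, map_mul, map_neg, map_pow, map_one, map_zero, map_TA, map_X, map_C]
  exact errA_eq qF qF_ne_zero qF_pow_ne_one

theorem errB_TA :
    TA 0 0 1 0 - TA 1 0 0 0 - TA 1 1 1 1 + (-C X * X) * TA 2 0 0 0 + (1 - C X * X - C X ^ 3 * X
      ^ 2) * TA 3 0 1 0 + (C X ^ 3 * X - C X ^ 4 * X ^ 2) * TA 4 0 0 0 + (-C X ^ 4 * X ^ 2) *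
      TA 4 1 1 1 + (C X ^ 4 * X - C X ^ 5 * X ^ 2) * TA 5 0 1 0 + (C X ^ 5 * X - C X ^ 6 * X ^
      2) * TA 6 1 1 1 = 0 := by
  apply mapF_injective
  simp only [map_add, map_sub, map_mul, map_neg, map_pow, map_one, map_zero, map_TA, map_X, map_C]
  exact errB_eq qF qF_ne_zero qF_pow_ne_one

theorem errC_TA :
    TA 0 0 0 0 - TA 1 0 0 0 - TA 1 0 1 0 + (1 - C X * X) * TA 2 0 0 0 + (-C X * X) * TA 2 0 1 0
      + (-C X ^ 3 * X ^ 2) * TA 3 0 0 0 + (-C X ^ 4 * X ^ 2) * TA 4 0 1 0 + (-C X ^ 5 * X ^ 2)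
      * TA 5 1 1 1 = 0 := by
  apply mapF_injective
  simp only [map_add, map_sub, map_mul, map_neg, map_pow, map_one, map_zero, map_TA, map_X, map_C]
  exact errC_eq qF qF_ne_zero qF_pow_ne_one

/-! ### The system of functional equations -/

/-- The series `∑ zⁿ / (q; q)_n`. -/
def eulerE : QS⟦X⟧ := PowerSeries.mk fun n => (qp X n)⁻¹

theorem rescale_eulerE : rescale (X : QS) eulerE = (1 - X) * eulerE := by
  ext1 n
  rw [coeff_rescale, sub_mul, one_mul, map_sub]
  cases n with
  | zero => simp
  | succ n =>
    rw [coeff_succ_X_mul, eulerE, coeff_mk, coeff_mk]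
    have h1 := PowerSeries.inv_mul_cancel _ (qp_ne_zero n)
    have h2 := PowerSeries.inv_mul_cancel _ (qp_ne_zero (n + 1))
    rw [qp_succ] at h2 ⊢
    linear_combination ((1 - X ^ (n + 1)) * ((1 - X ^ (n + 1)) * qp X n)⁻¹) * h1
      - (qp X n)⁻¹ * h2

/-- The Corteel–Welsh recurrences for rank `3` and level `5`. Here `g_c n` stands for the generating
function of cylindric partitions of profile `c` with all parts at most `n`; the seven profiles are
those of level `5` up to rotation, and the recurrences come from inclusion–exclusion over the
partitions whose largest part equals `n + 1`. -/
structure CWSystem (g500 g410 g401 g320 g302 g311 g221 : ℕ → QS) : Prop where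
  z500 : g500 0 = 1
  z410 : g410 0 = 1
  z401 : g401 0 = 1
  z320 : g320 0 = 1
  z302 : g302 0 = 1
  z311 : g311 0 = 1
  z221 : g221 0 = 1
  r500 : ∀ n, g500 (n + 1) = g500 n + X ^ (n + 1) * g410 (n + 1)
  r410 : ∀ n, g410 (n + 1) = g410 n + X ^ (n + 1) * (g320 (n + 1) + g401 (n + 1))
    - (X ^ (n + 1)) ^ 2 * g311 (n + 1)
  r401 : ∀ n, g401 (n + 1) = g401 n + X ^ (n + 1) * (g311 (n + 1) + g500 (n + 1))
    - (X ^ (n + 1)) ^ 2 * g410 (n + 1)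
  r320 : ∀ n, g320 (n + 1) = g320 n + X ^ (n + 1) * (g302 (n + 1) + g311 (n + 1))
    - (X ^ (n + 1)) ^ 2 * g221 (n + 1)
  r302 : ∀ n, g302 (n + 1) = g302 n + X ^ (n + 1) * (g221 (n + 1) + g401 (n + 1))
    - (X ^ (n + 1)) ^ 2 * g311 (n + 1)
  r311 : ∀ n, g311 (n + 1) = g311 n + X ^ (n + 1) * (g221 (n + 1) + g302 (n + 1) + g410 (n + 1))
    - (X ^ (n + 1)) ^ 2 * (g221 (n + 1) + g320 (n + 1) + g401 (n + 1))
    + (X ^ (n + 1)) ^ 3 * g311 (n + 1)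
  r221 : ∀ n, g221 (n + 1) = g221 n + X ^ (n + 1) * (g311 (n + 1) + g221 (n + 1) + g320 (n + 1))
    - (X ^ (n + 1)) ^ 2 * (g221 (n + 1) + g302 (n + 1) + g311 (n + 1))
    + (X ^ (n + 1)) ^ 3 * g221 (n + 1)

theorem eq_zero_of_X_pow_dvd {f : QS} (h : ∀ N, X ^ N ∣ f) : f = 0 := by
  ext n
  rw [map_zero]
  exact X_pow_dvd_iff.1 (h (n + 1)) n (Nat.lt_succ_self n)

/-- Modulo `q ^ (N + 1)` the recurrences express the values at `n + 1` through those at `n` and the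
values at `n + 1` modulo `q ^ N`, so the system has at most one solution. -/
theorem CWSystem.unique {g500 g410 g401 g320 g302 g311 g221 : ℕ → QS}
    {h500 h410 h401 h320 h302 h311 h221 : ℕ → QS}
    (G : CWSystem g500 g410 g401 g320 g302 g311 g221)
    (H : CWSystem h500 h410 h401 h320 h302 h311 h221) (n : ℕ) :
    g500 n = h500 n ∧ g410 n = h410 n ∧ g401 n = h401 n ∧ g320 n = h320 n ∧ g302 n = h302 n
      ∧ g311 n = h311 n ∧ g221 n = h221 n := by
  induction n with
  | zero =>
    exact ⟨G.z500.trans H.z500.symm, G.z410.trans H.z410.symm, G.z401.trans H.z401.symm,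
      G.z320.trans H.z320.symm, G.z302.trans H.z302.symm, G.z311.trans H.z311.symm,
      G.z221.trans H.z221.symm⟩
  | succ n ih =>
    obtain ⟨i500, i410, i401, i320, i302, i311, i221⟩ := ih
    have key : ∀ N : ℕ, (X : QS) ^ N ∣ g500 (n + 1) - h500 (n + 1) ∧
        X ^ N ∣ g410 (n + 1) - h410 (n + 1) ∧ X ^ N ∣ g401 (n + 1) - h401 (n + 1) ∧
        X ^ N ∣ g320 (n + 1) - h320 (n + 1) ∧ X ^ N ∣ g302 (n + 1) - h302 (n + 1) ∧
        X ^ N ∣ g311 (n + 1) - h311 (n + 1) ∧ X ^ N ∣ g221 (n + 1) - h221 (n + 1) := by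
      intro N
      induction N with
      | zero => simp
      | succ N ihN =>
        obtain ⟨⟨a, ha⟩, ⟨b, hb⟩, ⟨c, hc⟩, ⟨d, hd⟩, ⟨e, he⟩, ⟨f, hf⟩, ⟨g, hg⟩⟩ := ihN
        refine ⟨⟨X ^ n * b, ?_⟩, ⟨X ^ n * (d + c) - X ^ (2 * n + 1) * f, ?_⟩,
          ⟨X ^ n * (f + a) - X ^ (2 * n + 1) * b, ?_⟩,
          ⟨X ^ n * (e + f) - X ^ (2 * n + 1) * g, ?_⟩,
          ⟨X ^ n * (g + c) - X ^ (2 * n + 1) * f, ?_⟩,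
          ⟨X ^ n * (g + e + b) - X ^ (2 * n + 1) * (g + d + c) + X ^ (3 * n + 2) * f, ?_⟩,
          ⟨X ^ n * (f + g + d) - X ^ (2 * n + 1) * (g + e + f) + X ^ (3 * n + 2) * g, ?_⟩⟩
        · rw [G.r500, H.r500]
          linear_combination i500 + X ^ (n + 1) * hb
        · rw [G.r410, H.r410]
          linear_combination i410 + X ^ (n + 1) * (hd + hc) - (X ^ (n + 1)) ^ 2 * hf
        · rw [G.r401, H.r401]
          linear_combination i401 + X ^ (n + 1) * (hf + ha) - (X ^ (n + 1)) ^ 2 * hb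
        · rw [G.r320, H.r320]
          linear_combination i320 + X ^ (n + 1) * (he + hf) - (X ^ (n + 1)) ^ 2 * hg
        · rw [G.r302, H.r302]
          linear_combination i302 + X ^ (n + 1) * (hg + hc) - (X ^ (n + 1)) ^ 2 * hf
        · rw [G.r311, H.r311]
          linear_combination i311 + X ^ (n + 1) * (hg + he + hb)
            - (X ^ (n + 1)) ^ 2 * (hg + hd + hc) + (X ^ (n + 1)) ^ 3 * hf
        · rw [G.r221, H.r221]
          linear_combination i221 + X ^ (n + 1) * (hf + hg + hd)
            - (X ^ (n + 1)) ^ 2 * (hg + he + hf) + (X ^ (n + 1)) ^ 3 * hg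
    have fin : ∀ u v : QS, (∀ N : ℕ, X ^ N ∣ u - v) → u = v := fun u v h =>
      sub_eq_zero.1 (eq_zero_of_X_pow_dvd h)
    exact ⟨fin _ _ fun N => (key N).1, fin _ _ fun N => (key N).2.1,
      fin _ _ fun N => (key N).2.2.1, fin _ _ fun N => (key N).2.2.2.1,
      fin _ _ fun N => (key N).2.2.2.2.1, fin _ _ fun N => (key N).2.2.2.2.2.1,
      fin _ _ fun N => (key N).2.2.2.2.2.2⟩

local notation "Q" => C (X : QS)

/-- The series `(zq; q)_∞ F(z, q)` of profile `(4,0,1)`. -/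
def G401 : QS⟦X⟧ := TA 1 0 1 0 + Q * X * TA 2 1 1 1

/-- The series `(zq; q)_∞ F(z, q)` of profile `(3,0,2)`. -/
def G302 : QS⟦X⟧ := TA 1 0 0 0 + Q * X * TA 2 0 1 0 + Q ^ 2 * X * TA 3 1 1 1

/-- The series `(zq; q)_∞ F(z, q)` of profile `(3,2,0)`, in the form dictated by its own functional
equation `G320(z) = G302(qz) + TA0010(qz) - (1 - qz) TA0000(q²z)`. -/
def G320 : QS⟦X⟧ := TA 2 0 0 0 + Q ^ 2 * X * TA 3 0 1 0 + Q ^ 3 * X * TA 4 1 1 1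
  + TA 1 0 1 0 - (1 - Q * X) * TA 2 0 0 0

/-- A functional equation for a series `f` becomes a recurrence of Corteel–Welsh type for the
coefficients of `f * eulerE`, because `z ↦ qz` multiplies `eulerE` by `1 - z`. -/
theorem coeff_eq_of_functional {f a b c : QS⟦X⟧}
    (h : f = rescale X a - (1 - Q * X) * rescale X (rescale X b)
      + (1 - Q * X) * (1 - Q ^ 2 * X) * rescale X (rescale X (rescale X c))) (n : ℕ) :
    coeff (n + 1) (f * eulerE) = coeff n (f * eulerE) + X ^ (n + 1) * coeff (n + 1) (a * eulerE)
      - (X ^ (n + 1)) ^ 2 * coeff (n + 1) (b * eulerE)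
      + (X ^ (n + 1)) ^ 3 * coeff (n + 1) (c * eulerE) := by
  have e1 := rescale_eulerE
  have e2 : rescale X (rescale X eulerE) = (1 - Q * X) * (1 - X) * eulerE := by
    rw [e1, map_mul, e1, map_sub, map_one, rescale_X]; ring
  have e3 : rescale X (rescale X (rescale X eulerE))
      = (1 - Q ^ 2 * X) * (1 - Q * X) * (1 - X) * eulerE := by
    rw [e2]; simp only [map_mul, e1, map_sub, map_one, rescale_X, rescale_C']; ring
  have key : (1 - X) * (f * eulerE) = rescale X (a * eulerE)
      - rescale X (rescale X (b * eulerE)) + rescale X (rescale X (rescale X (c * eulerE))) := by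
    rw [map_mul _ a, map_mul _ b, map_mul, map_mul _ c, map_mul, map_mul, e3, e2, e1, h]
    ring
  have := congrArg (coeff (n + 1)) key
  rw [sub_mul, one_mul, map_sub, coeff_succ_X_mul, map_add, map_sub] at this
  simp only [coeff_rescale] at this
  linear_combination this

theorem coeff_zero_mul_eulerE {f : QS⟦X⟧} (h : constantCoeff f = 1) :
    coeff 0 (f * eulerE) = 1 := by
  rw [coeff_zero_eq_constantCoeff_apply, map_mul, h, one_mul, ← coeff_zero_eq_constantCoeff_apply,
    eulerE, coeff_mk]
  simp [qp]

theorem cwSystem_series : CWSystem (fun n => coeff n (TA 1 1 1 1 * eulerE))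
    (fun n => coeff n (TA 0 1 1 1 * eulerE)) (fun n => coeff n (G401 * eulerE))
    (fun n => coeff n (G320 * eulerE)) (fun n => coeff n (G302 * eulerE))
    (fun n => coeff n (TA 0 0 1 0 * eulerE)) (fun n => coeff n (TA 0 0 0 0 * eulerE)) where
  z500 := coeff_zero_mul_eulerE (constantCoeff_TA ..)
  z410 := coeff_zero_mul_eulerE (constantCoeff_TA ..)
  z401 := coeff_zero_mul_eulerE (by simp [G401, constantCoeff_TA])
  z320 := coeff_zero_mul_eulerE (by simp [G320, constantCoeff_TA])
  z302 := coeff_zero_mul_eulerE (by simp [G302, constantCoeff_TA])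
  z311 := coeff_zero_mul_eulerE (constantCoeff_TA ..)
  z221 := coeff_zero_mul_eulerE (constantCoeff_TA ..)
  r500 n := by
    have := coeff_eq_of_functional (f := TA 1 1 1 1) (a := TA 0 1 1 1) (b := 0) (c := 0)
      (by simp [rescale_TA]) n
    simpa using this
  r410 n := by
    have := coeff_eq_of_functional (f := TA 0 1 1 1) (a := G320 + G401) (b := TA 0 0 1 0) (c := 0)
      (by
        simp only [G320, G401, map_add, map_sub, map_mul, map_pow, map_one, map_zero, rescale_TA,
          rescale_X, rescale_C']
        linear_combination errA_TA) n
    simpa [add_mul] using this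
  r401 n := by
    have := coeff_eq_of_functional (f := G401) (a := TA 0 0 1 0 + TA 1 1 1 1) (b := TA 0 1 1 1)
      (c := 0) (by simp only [G401, map_add, map_zero, rescale_TA]; ring) n
    simpa [add_mul] using this
  r320 n := by
    have := coeff_eq_of_functional (f := G320) (a := G302 + TA 0 0 1 0) (b := TA 0 0 0 0) (c := 0)
      (by
        simp only [G320, G302, map_add, map_mul, map_pow, map_zero, rescale_TA, rescale_X,
          rescale_C']
        ring) n
    simpa [add_mul] using this
  r302 n := by
    have := coeff_eq_of_functional (f := G302) (a := TA 0 0 0 0 + G401) (b := TA 0 0 1 0) (c := 0)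
      (by
        simp only [G401, G302, map_add, map_mul, map_zero, rescale_TA, rescale_X,
          rescale_C']
        ring) n
    simpa [add_mul] using this
  r311 n := by
    have := coeff_eq_of_functional (f := TA 0 0 1 0) (a := TA 0 0 0 0 + G302 + TA 0 1 1 1)
      (b := TA 0 0 0 0 + G320 + G401) (c := TA 0 0 1 0)
      (by
        simp only [G320, G401, G302, map_add, map_sub, map_mul, map_pow, map_one, rescale_TA,
          rescale_X, rescale_C']
        linear_combination errB_TA) n
    simpa [add_mul] using this
  r221 n := by
    have := coeff_eq_of_functional (f := TA 0 0 0 0) (a := TA 0 0 1 0 + TA 0 0 0 0 + G320)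
      (b := TA 0 0 0 0 + G302 + TA 0 0 1 0) (c := TA 0 0 0 0)
      (by
        simp only [G320, G302, map_add, map_sub, map_mul, map_pow, map_one, rescale_TA,
          rescale_X, rescale_C']
        linear_combination errC_TA) n
    simpa [add_mul] using this

end Transfer

/-! ### Counting cylindric partitions with bounded parts -/

noncomputable section Count

open PowerSeries

/-- A partition as an antitone, eventually vanishing sequence. -/
def IsPart (f : ℕ → ℕ) : Prop := Antitone f ∧ ∃ N, ∀ j, N ≤ j → f j = 0

theorem IsPart.summable {f : ℕ → ℕ} (hf : IsPart f) : Summable f := by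
  obtain ⟨-, N, hN⟩ := hf
  exact summable_of_ne_finset_zero (s := Finset.range N) fun j hj =>
    hN j (by simpa using hj)

/-- The sequence `n, f 0, f 1, …`. -/
def consSeq (n : ℕ) (f : ℕ → ℕ) : ℕ → ℕ
  | 0 => n
  | j + 1 => f j

theorem IsPart.consSeq {f : ℕ → ℕ} (hf : IsPart f) {n : ℕ} (h : f 0 ≤ n) :
    IsPart (consSeq n f) := by
  obtain ⟨ha, N, hN⟩ := hf
  refine ⟨antitone_nat_of_succ_le ?_, N + 1, ?_⟩
  · rintro (_ | j)
    · exact h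
    · exact ha (Nat.le_succ j)
  · rintro (_ | j) hj
    · omega
    · exact hN j (by omega)

theorem IsPart.tail {f : ℕ → ℕ} (hf : IsPart f) : IsPart (fun j => f (j + 1)) := by
  obtain ⟨ha, N, hN⟩ := hf
  exact ⟨fun i j h => ha (Nat.succ_le_succ h), N, fun j hj => hN _ (by omega)⟩

theorem tsum_consSeq {f : ℕ → ℕ} (hf : IsPart f) (n : ℕ) :
    ∑' j, consSeq n f j = n + ∑' j, f j :=
  tsum_eq_zero_add' (f := consSeq n f) hf.summable

theorem IsPart.le_tsum {f : ℕ → ℕ} (hf : IsPart f) (j : ℕ) : f j ≤ ∑' j, f j :=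
  hf.summable.le_tsum' j

theorem IsPart.eq_zero {f : ℕ → ℕ} (hf : IsPart f) {j : ℕ} (h : ∑' j, f j ≤ j) : f j = 0 := by
  by_contra h0
  have h1 : ∑ i ∈ Finset.range (j + 1), 1 ≤ ∑ i ∈ Finset.range (j + 1), f i :=
    Finset.sum_le_sum fun i hi =>
      (Nat.one_le_iff_ne_zero.2 h0).trans (hf.1 (by simpa [Nat.lt_succ_iff] using hi))
  have h2 := hf.summable.sum_le_tsum (Finset.range (j + 1)) fun _ _ => Nat.zero_le _
  simp at h1
  omega

/-- Triples of partitions, of total size `m`, satisfying the interlacing conditions of a cylindric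
partition of profile `(a, b, c)`, with separate bounds `u`, `v`, `w` on their largest parts. -/
def cylSet (a b c u v w m : ℕ) : Set ((ℕ → ℕ) × (ℕ → ℕ) × (ℕ → ℕ)) :=
  {t | (IsPart t.1 ∧ IsPart t.2.1 ∧ IsPart t.2.2) ∧
    ((∀ j, t.1 (j + a) ≤ t.2.2 j) ∧ (∀ j, t.2.1 (j + b) ≤ t.1 j) ∧ ∀ j, t.2.2 (j + c) ≤ t.2.1 j) ∧
    (t.1 0 ≤ u ∧ t.2.1 0 ≤ v ∧ t.2.2 0 ≤ w) ∧
    ∑' j, t.1 j + ∑' j, t.2.1 j + ∑' j, t.2.2 j = m}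

/-- A partition of size at most `m` is determined by its first `m` parts, each at most `m`. -/
theorem finite_isPart (m : ℕ) : {f : ℕ → ℕ | IsPart f ∧ ∑' j, f j ≤ m}.Finite := by
  refine (Set.finite_range fun (φ : Fin m → Fin (m + 1)) (j : ℕ) =>
    if h : j < m then (φ ⟨j, h⟩ : ℕ) else 0).subset ?_
  rintro f ⟨hf, hm⟩
  refine ⟨fun j => ⟨f j, Nat.lt_succ_of_le ((hf.le_tsum j).trans hm)⟩, ?_⟩
  funext j
  dsimp only
  split_ifs with h
  · rfl
  · exact (hf.eq_zero (hm.trans (not_lt.1 h))).symm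

theorem finite_cylSet (a b c u v w m : ℕ) : (cylSet a b c u v w m).Finite := by
  refine ((finite_isPart m).prod ((finite_isPart m).prod (finite_isPart m))).subset ?_
  rintro ⟨f, g, h⟩ ⟨⟨h1, h2, h3⟩, -, -, h4⟩
  simp only at h1 h2 h3 h4
  exact ⟨⟨h1, by simp only; omega⟩, ⟨h2, by simp only; omega⟩, ⟨h3, by simp only; omega⟩⟩

/-- The generating function, by size, of the triples in `cylSet`. -/
def cylH (a b c u v w : ℕ) : QS := PowerSeries.mk fun m => ((cylSet a b c u v w m).ncard : ℚ)

theorem cylH_rot (a b c u v w : ℕ) : cylH a b c u v w = cylH b c a v w u := by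
  ext m
  rw [cylH, cylH, coeff_mk, coeff_mk, Nat.cast_inj]
  refine Set.ncard_congr (fun t _ => (t.2.1, t.2.2, t.1)) ?_ ?_ ?_
  · rintro ⟨f, g, h⟩ ⟨⟨h1, h2, h3⟩, ⟨h4, h5, h6⟩, ⟨h7, h8, h9⟩, h10⟩
    exact ⟨⟨h2, h3, h1⟩, ⟨h5, h6, h4⟩, ⟨h8, h9, h7⟩, by simp only at h10 ⊢; omega⟩
  · rintro ⟨f, g, h⟩ ⟨f', g', h'⟩ - - e
    simp only [Prod.mk.injEq] at e ⊢
    tauto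
  · rintro ⟨f, g, h⟩ ⟨⟨h1, h2, h3⟩, ⟨h4, h5, h6⟩, ⟨h7, h8, h9⟩, h10⟩
    exact ⟨(h, f, g), ⟨⟨h3, h1, h2⟩, ⟨h6, h4, h5⟩, ⟨h9, h7, h8⟩, by simp only at h10 ⊢; omega⟩, rfl⟩

/-- Either the first partition has largest part at most `n`, or its largest part is `n + 1`; removing
that part shifts the first partition and so lowers `a + 1` to `a` and raises `b` to `b + 1`. -/
theorem cylH_step₀ (a b c n v w : ℕ) (hv : v ≤ n + 1) :
    cylH (a + 1) b c (n + 1) v w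
      = cylH (a + 1) b c n v w + X ^ (n + 1) * cylH a (b + 1) c (n + 1) v w := by
  ext m
  set R : Set ((ℕ → ℕ) × (ℕ → ℕ) × (ℕ → ℕ)) :=
    {t | t ∈ cylSet (a + 1) b c (n + 1) v w m ∧ t.1 0 = n + 1} with hR
  have hunion : cylSet (a + 1) b c (n + 1) v w m = cylSet (a + 1) b c n v w m ∪ R := by
    ext ⟨f, g, h⟩
    simp only [hR, cylSet, Set.mem_union, Set.mem_ofPred_eq]
    constructor
    · rintro ⟨h1, h2, ⟨h3, h4⟩, h5⟩
      rcases Nat.lt_or_ge (f 0) (n + 1) with hlt | hge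
      · exact Or.inl ⟨h1, h2, ⟨by omega, h4⟩, h5⟩
      · exact Or.inr ⟨⟨h1, h2, ⟨h3, h4⟩, h5⟩, by omega⟩
    · rintro (⟨h1, h2, ⟨h3, h4⟩, h5⟩ | ⟨h1, -⟩)
      · exact ⟨h1, h2, ⟨by omega, h4⟩, h5⟩
      · exact h1
  have hdisj : Disjoint (cylSet (a + 1) b c n v w m) R := by
    rw [Set.disjoint_left]
    rintro ⟨f, g, h⟩ ⟨-, -, ⟨h1, -⟩, -⟩ ⟨-, h2⟩
    simp only at h1 h2
    omega
  have hRfin : R.Finite := (finite_cylSet (a + 1) b c (n + 1) v w m).subset fun t ht => ht.1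
  have hRcard : (R.ncard : ℚ) = coeff m (X ^ (n + 1) * cylH a (b + 1) c (n + 1) v w) := by
    rw [coeff_X_pow_mul']
    split_ifs with hm
    · rw [cylH, coeff_mk, Nat.cast_inj]
      refine (Set.ncard_congr (fun t _ => (consSeq (n + 1) t.1, t.2)) ?_ ?_ ?_).symm
      · rintro ⟨f, g, h⟩ ⟨⟨h1, h2, h3⟩, ⟨h4, h5, h6⟩, ⟨h7, h8, h9⟩, h10⟩
        simp only at h1 h2 h3 h4 h5 h6 h7 h8 h9 h10
        refine ⟨⟨⟨h1.consSeq h7, h2, h3⟩, ⟨h4, ?_, h6⟩, ⟨le_refl _, h8, h9⟩, ?_⟩, rfl⟩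
        · rintro (_ | j)
          · exact (h2.1 (Nat.zero_le _)).trans (h8.trans hv)
          · have := h5 j
            rwa [← add_assoc, add_right_comm] at this
        · simp only [tsum_consSeq h1]
          omega
      · rintro ⟨f, g, h⟩ ⟨f', g', h'⟩ - - e
        simp only [Prod.mk.injEq] at e ⊢
        exact ⟨funext fun j => congrFun e.1 (j + 1), e.2⟩
      · rintro ⟨f, g, h⟩ ⟨⟨⟨h1, h2, h3⟩, ⟨h4, h5, h6⟩, ⟨h7, h8, h9⟩, h10⟩, h11⟩
        simp only at h1 h2 h3 h4 h5 h6 h7 h8 h9 h10 h11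
        have hc : consSeq (n + 1) (fun j => f (j + 1)) = f := by
          funext j
          cases j with
          | zero => exact h11.symm
          | succ j => rfl
        have hs := tsum_consSeq h1.tail (n + 1)
        rw [hc] at hs
        refine ⟨(fun j => f (j + 1), g, h), ⟨⟨h1.tail, h2, h3⟩, ⟨h4, ?_, h6⟩, ⟨?_, h8, h9⟩, ?_⟩, ?_⟩
        · intro j
          have := h5 (j + 1)
          rwa [add_right_comm, add_assoc] at this
        · exact (h1.1 (Nat.zero_le _)).trans h7
        · simp only
          omega
        · simp only [hc]
    · rw [Nat.cast_eq_zero, Set.ncard_eq_zero hRfin, Set.eq_empty_iff_forall_notMem]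
      rintro ⟨f, g, h⟩ ⟨⟨⟨h1, -⟩, -, -, h10⟩, h11⟩
      simp only at h1 h10 h11
      have := h1.le_tsum 0
      omega
  rw [map_add, ← hRcard, cylH, cylH, coeff_mk, coeff_mk, hunion,
    Set.ncard_union_eq hdisj (finite_cylSet ..) hRfin, Nat.cast_add]

theorem cylH_step₁ (a b c n u w : ℕ) (hw : w ≤ n + 1) :
    cylH a (b + 1) c u (n + 1) w
      = cylH a (b + 1) c u n w + X ^ (n + 1) * cylH a b (c + 1) u (n + 1) w := by
  rw [cylH_rot a, cylH_rot a, cylH_rot a, cylH_step₀ _ _ _ _ _ _ hw]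

theorem cylH_step₂ (a b c n u v : ℕ) (hu : u ≤ n + 1) :
    cylH a b (c + 1) u v (n + 1)
      = cylH a b (c + 1) u v n + X ^ (n + 1) * cylH (a + 1) b c u v (n + 1) := by
  rw [cylH_rot a, cylH_rot a, cylH_rot (a + 1), cylH_step₁ _ _ _ _ _ _ hu]

/-- When the middle parameter is `0`, the second partition is dominated by the first one, so its
bound may be lowered. -/
theorem cylH_reduce₁ (a c n u w : ℕ) (hu : u ≤ n) :
    cylH a 0 c u (n + 1) w = cylH a 0 c u n w := by
  ext m
  rw [cylH, cylH, coeff_mk, coeff_mk]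
  congr 2
  ext ⟨f, g, h⟩
  constructor
  · rintro ⟨h1, ⟨h2, h3, h4⟩, ⟨h5, h6, h7⟩, h8⟩
    exact ⟨h1, ⟨h2, h3, h4⟩, ⟨h5, (h3 0).trans (h5.trans hu), h7⟩, h8⟩
  · rintro ⟨h1, h2, ⟨h5, h6, h7⟩, h8⟩
    exact ⟨h1, h2, ⟨h5, h6.trans (Nat.le_succ n), h7⟩, h8⟩

theorem cylH_reduce₂ (a b n u v : ℕ) (hv : v ≤ n) :
    cylH a b 0 u v (n + 1) = cylH a b 0 u v n := by
  rw [cylH_rot a, cylH_rot a, cylH_reduce₁ _ _ _ _ _ hv]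

theorem cylH_zero (a b c : ℕ) : cylH a b c 0 0 0 = 1 := by
  have hz : IsPart (fun _ => 0) := ⟨fun _ _ _ => le_refl _, 0, fun _ _ => rfl⟩
  have h0 : ∀ f : ℕ → ℕ, IsPart f → f 0 ≤ 0 → f = fun _ => 0 := fun f hf h => by
    funext j
    exact Nat.le_zero.1 ((hf.1 (Nat.zero_le j)).trans h)
  ext m
  rw [cylH, coeff_mk, coeff_one]
  split_ifs with hm
  · subst hm
    have : cylSet a b c 0 0 0 0 = {(fun _ => 0, fun _ => 0, fun _ => 0)} := by
      ext ⟨f, g, h⟩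
      constructor
      · rintro ⟨⟨h1, h2, h3⟩, -, ⟨h4, h5, h6⟩, -⟩
        simp only at h1 h2 h3 h4 h5 h6
        rw [h0 f h1 h4, h0 g h2 h5, h0 h h3 h6]
        rfl
      · rintro ⟨rfl, rfl, rfl⟩
        refine ⟨⟨hz, hz, hz⟩, ?_, ?_, ?_⟩ <;> simp
    rw [this, Set.ncard_singleton, Nat.cast_one]
  · rw [Nat.cast_eq_zero, Set.ncard_eq_zero (finite_cylSet ..), Set.eq_empty_iff_forall_notMem]
    rintro ⟨f, g, h⟩ ⟨⟨h1, h2, h3⟩, -, ⟨h4, h5, h6⟩, h7⟩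
    simp only at h1 h2 h3 h4 h5 h6 h7
    rw [h0 f h1 h4, h0 g h2 h5, h0 h h3 h6] at h7
    simp at h7
    exact hm h7.symm

theorem cylH_rec₁ (a n : ℕ) :
    cylH (a + 1) 0 0 (n + 1) (n + 1) (n + 1) = cylH (a + 1) 0 0 n n n
      + X ^ (n + 1) * cylH a 1 0 (n + 1) (n + 1) (n + 1) := by
  rw [cylH_step₀ _ _ _ _ _ _ le_rfl, cylH_reduce₁ _ _ _ _ _ le_rfl, cylH_reduce₂ _ _ _ _ _ le_rfl]

theorem cylH_rec₂ (a b n : ℕ) :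
    cylH (a + 1) (b + 1) 0 (n + 1) (n + 1) (n + 1) = cylH (a + 1) (b + 1) 0 n n n
      + X ^ (n + 1) * (cylH a (b + 2) 0 (n + 1) (n + 1) (n + 1)
        + cylH (a + 1) b 1 (n + 1) (n + 1) (n + 1))
      - (X ^ (n + 1)) ^ 2 * cylH a (b + 1) 1 (n + 1) (n + 1) (n + 1) := by
  have h1 := cylH_step₀ a (b + 1) 0 n (n + 1) (n + 1) le_rfl
  have h2 := cylH_step₁ (a + 1) b 0 n n (n + 1) le_rfl
  have h3 := cylH_reduce₂ (a + 1) (b + 1) n n n le_rfl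
  have h4 := cylH_step₀ a b 1 n (n + 1) (n + 1) le_rfl
  linear_combination h1 + h2 + h3 - X ^ (n + 1) * h4

theorem cylH_rec₃ (a b c n : ℕ) :
    cylH (a + 1) (b + 1) (c + 1) (n + 1) (n + 1) (n + 1) = cylH (a + 1) (b + 1) (c + 1) n n n
      + X ^ (n + 1) * (cylH a (b + 2) (c + 1) (n + 1) (n + 1) (n + 1)
        + cylH (a + 1) b (c + 2) (n + 1) (n + 1) (n + 1)
        + cylH (a + 2) (b + 1) c (n + 1) (n + 1) (n + 1))
      - (X ^ (n + 1)) ^ 2 * (cylH a (b + 1) (c + 2) (n + 1) (n + 1) (n + 1)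
        + cylH (a + 1) (b + 2) c (n + 1) (n + 1) (n + 1)
        + cylH (a + 2) b (c + 1) (n + 1) (n + 1) (n + 1))
      + (X ^ (n + 1)) ^ 3 * cylH (a + 1) (b + 1) (c + 1) (n + 1) (n + 1) (n + 1) := by
  have h1 := cylH_step₀ a (b + 1) (c + 1) n (n + 1) (n + 1) le_rfl
  have h2 := cylH_step₁ (a + 1) b (c + 1) n n (n + 1) le_rfl
  have h3 := cylH_step₂ (a + 1) (b + 1) c n n n (Nat.le_succ n)
  have h4 := cylH_step₀ a b (c + 2) n (n + 1) (n + 1) le_rfl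
  have h5 := cylH_step₁ (a + 2) b c n n (n + 1) le_rfl
  have h6 := cylH_step₀ (a + 1) (b + 1) c n (n + 1) (n + 1) le_rfl
  have h7 := cylH_step₀ (a + 1) b (c + 1) n (n + 1) (n + 1) le_rfl
  linear_combination h1 + h2 + h3 - X ^ (n + 1) * (h4 + h5 + h6) + (X ^ (n + 1)) ^ 2 * h7

theorem cwSystem_cylH : CWSystem (fun n => cylH 5 0 0 n n n) (fun n => cylH 4 1 0 n n n)
    (fun n => cylH 4 0 1 n n n) (fun n => cylH 3 2 0 n n n) (fun n => cylH 3 0 2 n n n)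
    (fun n => cylH 3 1 1 n n n) (fun n => cylH 2 2 1 n n n) where
  z500 := cylH_zero ..
  z410 := cylH_zero ..
  z401 := cylH_zero ..
  z320 := cylH_zero ..
  z302 := cylH_zero ..
  z311 := cylH_zero ..
  z221 := cylH_zero ..
  r500 := cylH_rec₁ 4
  r410 := cylH_rec₂ 3 0
  r401 n := by
    have h := cylH_rec₂ 0 3 n
    simp only [cylH_rot 0 5 0, cylH_rot 0 4 1, cylH_rot 1 4 0, cylH_rot 1 3 1] at h
    linear_combination h
  r320 n := by
    have h := cylH_rec₂ 2 1 n
    simp only [cylH_rot 2 3 0] at h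
    linear_combination h
  r302 n := by
    have h := cylH_rec₂ 1 2 n
    simp only [cylH_rot 2 3 0, cylH_rot 1 4 0, cylH_rot 1 3 1] at h
    linear_combination h
  r311 n := by
    have h := cylH_rec₃ 2 0 0 n
    simp only [cylH_rot 2 1 2, cylH_rot 1 2 2] at h
    linear_combination h
  r221 n := by
    have h := cylH_rec₃ 1 1 0 n
    simp only [cylH_rot 2 1 2, cylH_rot 1 2 2, cylH_rot 1 3 1, cylH_rot 2 3 0] at h
    linear_combination h

theorem cylH_221 (n : ℕ) : cylH 2 2 1 n n n = coeff n (TA 0 0 0 0 * eulerE) :=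
  (cwSystem_cylH.unique cwSystem_series n).2.2.2.2.2.2

end Count

/-! ### From `ℚ⟦z, q⟧` to `ℚ⟦q⟧⟦z⟧` -/

noncomputable section Final

open PowerSeries Filter Topology

/-- The isomorphism `ℚ⟦z, q⟧ ≃ ℚ⟦q⟧⟦z⟧`: the first variable becomes the outer one. -/
def toIter : MvPowerSeries (Fin 2) ℚ ≃ₐ[ℚ] QS⟦X⟧ :=
  (MvPowerSeries.renameEquiv ℚ
    ((finSuccEquiv 1).trans (Equiv.optionCongr (Equiv.ofUnique (Fin 1) Unit)))).trans
    (MvPowerSeries.optionEquivLeft Unit ℚ)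

theorem toIter_X (i : Fin 2) : toIter (MvPowerSeries.X i) = MvPowerSeries.optionEquivLeft Unit ℚ
    (MvPowerSeries.X ((finSuccEquiv 1).trans
      (Equiv.optionCongr (Equiv.ofUnique (Fin 1) Unit)) i)) :=
  congrArg (MvPowerSeries.optionEquivLeft Unit ℚ) (MvPowerSeries.rename_X
    ((finSuccEquiv 1).trans (Equiv.optionCongr (Equiv.ofUnique (Fin 1) Unit))) i)

theorem toIter_z : toIter z = X := by
  rw [z, toIter_X]
  exact MvPowerSeries.optionEquivLeft_X_none

theorem toIter_q : toIter q = C (X : QS) := by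
  rw [q, toIter_X]
  exact MvPowerSeries.optionEquivLeft_X_some ()

/-- Every coefficient of a series in two variables is a coefficient of the iterated series, so that
coefficientwise statements may be checked in `ℚ⟦q⟧⟦z⟧`. -/
theorem exists_coeff_toIter (d : Fin 2 →₀ ℕ) : ∃ n m : ℕ, ∀ p : MvPowerSeries (Fin 2) ℚ,
    MvPowerSeries.coeff d p = coeff m (coeff n (toIter p)) := by
  set e : Fin 2 ≃ Option Unit :=
    (finSuccEquiv 1).trans (Equiv.optionCongr (Equiv.ofUnique (Fin 1) Unit)) with he
  set x : Option Unit →₀ ℕ := Finsupp.embDomain e.toEmbedding d with hx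
  refine ⟨x none, x (some ()), fun p => ?_⟩
  have h := MvPowerSeries.coeff_coeff_optionEquivLeft (MvPowerSeries.rename e p) (x none) x.some
  have h2 := MvPowerSeries.coeff_embDomain_rename e.toEmbedding p d
  have h3 : x.some.optionElim (x none) = x := by
    ext a
    cases a <;> simp
  rw [h3] at h
  rw [← h2]
  refine h.symm.trans ?_
  have h4 : x.some = Finsupp.single () (x (some ())) := by
    ext
    simp
  rw [h4]
  rfl

instance : T2Space (MvPowerSeries (Fin 2) ℚ) :=
  inferInstanceAs (T2Space ((Fin 2 →₀ ℕ) → ℚ))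

theorem tendsto_of_coeff {ι : Type*} {l : Filter ι} {f : ι → MvPowerSeries (Fin 2) ℚ}
    {a : MvPowerSeries (Fin 2) ℚ}
    (h : ∀ n m, ∀ᶠ i in l, coeff m (coeff n (toIter (f i))) = coeff m (coeff n (toIter a))) :
    Tendsto f l (𝓝 a) := by
  refine tendsto_pi_nhds.2 fun d => ?_
  obtain ⟨n, m, hd⟩ := exists_coeff_toIter d
  refine tendsto_nhds_of_eventually_eq ((h n m).mono fun i hi => ?_)
  rw [← hd, ← hd] at hi
  exact hi

theorem tsum_eq_of_coeff {ι : Type*} {f : ι → MvPowerSeries (Fin 2) ℚ} {b : QS⟦X⟧}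
    (h : ∀ n m, ∃ s : Finset ι, (∀ i ∉ s, coeff m (coeff n (toIter (f i))) = 0) ∧
      ∑ i ∈ s, coeff m (coeff n (toIter (f i))) = coeff m (coeff n b)) :
    toIter (∑' i, f i) = b := by
  have hs : HasSum f (toIter.symm b) := by
    refine tendsto_of_coeff fun n m => ?_
    obtain ⟨s, h1, h2⟩ := h n m
    refine (eventually_ge_atTop s).mono fun t ht => ?_
    rw [AlgEquiv.apply_symm_apply, map_sum, map_sum, map_sum, ← h2]
    exact (Finset.sum_subset ht fun i _ hi => h1 i hi).symm
  rw [hs.tsum_eq, AlgEquiv.apply_symm_apply]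

/-! ### The generating function -/

theorem coeff_coeff_monomial (n m i j : ℕ) :
    coeff m (coeff n ((X : QS⟦X⟧) ^ i * C (X : QS) ^ j))
      = if n = i ∧ m = j then (1 : ℚ) else 0 := by
  rw [← map_pow, mul_comm, coeff_C_mul, coeff_X_pow]
  by_cases h : n = i <;> simp [h, coeff_X_pow]

theorem CylindricPartition.ext_part {k : ℕ} [NeZero k] {c : Fin k → ℕ}
    {Λ M : CylindricPartition k c} (h : Λ.part = M.part) : Λ = M := by
  cases Λ
  cases M
  cases h
  rfl

/-- The three partitions of a cylindric partition of rank three, as a triple of sequences. -/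
def triple {c : Fin 3 → ℕ} (Λ : CylindricPartition 3 c) : (ℕ → ℕ) × (ℕ → ℕ) × (ℕ → ℕ) :=
  (Λ.part 0, Λ.part 1, Λ.part 2)

theorem triple_injective {c : Fin 3 → ℕ} : Function.Injective (triple (c := c)) := by
  intro Λ M h
  simp only [triple, Prod.mk.injEq] at h
  refine CylindricPartition.ext_part (funext fun i => ?_)
  fin_cases i
  exacts [h.1, h.2.1, h.2.2]

theorem CylindricPartition.size_three {c : Fin 3 → ℕ} (Λ : CylindricPartition 3 c) :
    Λ.size = ∑' j, Λ.part 0 j + ∑' j, Λ.part 1 j + ∑' j, Λ.part 2 j := by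
  rw [CylindricPartition.size, tsum_fintype, Fin.sum_univ_three]

theorem CylindricPartition.maxPart_le {c : Fin 3 → ℕ} (Λ : CylindricPartition 3 c) (n : ℕ) :
    Λ.maxPart ≤ n ↔ Λ.part 0 0 ≤ n ∧ Λ.part 1 0 ≤ n ∧ Λ.part 2 0 ≤ n := by
  rw [CylindricPartition.maxPart, Finset.sup_le_iff]
  simp [Fin.forall_fin_succ]

theorem image_triple (a b c n m : ℕ) :
    triple '' {Λ : CylindricPartition 3 ![a, b, c] | Λ.maxPart ≤ n ∧ Λ.size = m}
      = cylSet a b c n n n m := by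
  ext ⟨f, g, h⟩
  constructor
  · rintro ⟨Λ, ⟨h1, h2⟩, h3⟩
    simp only [triple, Prod.mk.injEq] at h3
    obtain ⟨rfl, rfl, rfl⟩ := h3
    rw [Λ.maxPart_le] at h1
    rw [Λ.size_three] at h2
    exact ⟨⟨⟨Λ.antitone 0, Λ.finite_support 0⟩, ⟨Λ.antitone 1, Λ.finite_support 1⟩,
      ⟨Λ.antitone 2, Λ.finite_support 2⟩⟩, ⟨Λ.cyl 2, Λ.cyl 0, Λ.cyl 1⟩, h1, h2⟩
  · rintro ⟨⟨h1, h2, h3⟩, ⟨h4, h5, h6⟩, h7, h8⟩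
    refine ⟨⟨![f, g, h], ?_, ?_, ?_⟩, ⟨?_, ?_⟩, rfl⟩
    · intro i
      fin_cases i
      exacts [h1.1, h2.1, h3.1]
    · intro i
      fin_cases i
      exacts [h1.2, h2.2, h3.2]
    · intro i
      fin_cases i
      exacts [h5, h6, h4]
    · rw [CylindricPartition.maxPart_le]
      exact h7
    · rw [CylindricPartition.size_three]
      exact h8

theorem finite_cylindric (a b c n m : ℕ) :
    {Λ : CylindricPartition 3 ![a, b, c] | Λ.maxPart ≤ n ∧ Λ.size = m}.Finite := by
  refine Set.Finite.of_finite_image ?_ triple_injective.injOn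
  rw [image_triple]
  exact finite_cylSet ..

theorem coeff_cylH (a b c n m : ℕ) : coeff m (cylH a b c n n n)
    = ({Λ : CylindricPartition 3 ![a, b, c] | Λ.maxPart ≤ n ∧ Λ.size = m}.ncard : ℚ) := by
  rw [cylH, coeff_mk, ← image_triple, Set.ncard_image_of_injective _ triple_injective]

/-- Partitions with largest part exactly `n` are counted by differences of `cylH`, hence the factor
`1 - z`. -/
theorem toIter_cylGF (a b c : ℕ) : toIter (cylGF 3 ![a, b, c] z)
    = (1 - X) * PowerSeries.mk fun n => cylH a b c n n n := by
  refine tsum_eq_of_coeff fun n m => ?_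
  have hfin : {Λ : CylindricPartition 3 ![a, b, c] | Λ.maxPart = n ∧ Λ.size = m}.Finite :=
    (finite_cylindric a b c n m).subset fun Λ h => ⟨h.1.le, h.2⟩
  have hc : ∀ Λ : CylindricPartition 3 ![a, b, c],
      coeff m (coeff n (toIter (z ^ Λ.maxPart * q ^ Λ.size)))
        = if n = Λ.maxPart ∧ m = Λ.size then (1 : ℚ) else 0 := fun Λ => by
    rw [map_mul, map_pow, map_pow, toIter_z, toIter_q, coeff_coeff_monomial]
  refine ⟨hfin.toFinset, fun Λ h => ?_, ?_⟩
  · rw [Set.Finite.mem_toFinset] at h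
    rw [hc, if_neg fun h' => h ⟨h'.1.symm, h'.2.symm⟩]
  · have h1 : ∑ Λ ∈ hfin.toFinset, coeff m (coeff n (toIter (z ^ Λ.maxPart * q ^ Λ.size)))
        = ({Λ : CylindricPartition 3 ![a, b, c] | Λ.maxPart = n ∧ Λ.size = m}.ncard : ℚ) := by
      rw [Set.ncard_eq_toFinset_card _ hfin, Finset.cast_card]
      refine Finset.sum_congr rfl fun Λ h => ?_
      rw [Set.Finite.mem_toFinset] at h
      rw [hc, if_pos ⟨h.1.symm, h.2.symm⟩]
    rw [h1, sub_mul, one_mul, map_sub, map_sub, coeff_mk, coeff_cylH]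
    cases n with
    | zero => simp
    | succ n =>
      rw [coeff_succ_X_mul, coeff_mk, coeff_cylH, eq_sub_iff_add_eq, ← Nat.cast_add,
        Nat.cast_inj, ← Set.ncard_union_eq _ hfin (finite_cylindric a b c n m)]
      · congr 1
        ext Λ
        simp only [Set.mem_union, Set.mem_ofPred_eq]
        omega
      · rw [Set.disjoint_left]
        rintro Λ ⟨h2, -⟩ ⟨h3, -⟩
        omega

/-! ### The infinite product -/

/-- The iterate of `rescale_eulerE`, started from the series `∑ (zq)ⁿ / (q; q)_n`. -/
theorem rescale_pow_eulerE (N : ℕ) : rescale ((X : QS) ^ N) (rescale (X : QS) eulerE)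
    = (∏ m ∈ Finset.range N, (1 - X * C (X : QS) ^ (m + 1))) * rescale (X : QS) eulerE := by
  induction N with
  | zero => simp
  | succ N ih =>
    have h := congrArg (rescale ((X : QS) ^ (N + 1))) rescale_eulerE
    rw [map_mul, map_sub, map_one, rescale_X] at h
    have h2 : rescale ((X : QS) ^ (N + 1)) eulerE
        = rescale ((X : QS) ^ N) (rescale (X : QS) eulerE) := by
      rw [rescale_rescale, ← pow_succ']
    rw [h, h2, ih, Finset.prod_range_succ, map_pow]
    ring

/-- Substituting `z q ^ N` for `z` leaves only the constant term modulo `q ^ N`. -/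
theorem dvd_rescale_sub_one {f : QS⟦X⟧} (hf : constantCoeff f = 1) (N : ℕ) :
    C ((X : QS) ^ N) ∣ rescale ((X : QS) ^ N) f - 1 := by
  refine ⟨PowerSeries.mk fun n => if n = 0 then 0 else X ^ (N * (n - 1)) * coeff n f, ?_⟩
  ext1 n
  rw [coeff_C_mul, coeff_mk, map_sub, coeff_rescale, coeff_one]
  cases n with
  | zero => simp [hf]
  | succ n =>
    simp only [Nat.succ_ne_zero, if_false, Nat.add_sub_cancel]
    ring

theorem dvd_prod_sub_one (N : ℕ) (s : Finset ℕ) (hs : ∀ m ∈ s, N ≤ m) :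
    C ((X : QS) ^ N) ∣ ∏ m ∈ s, (1 - X * C (X : QS) ^ (m + 1)) - 1 := by
  induction s using Finset.induction_on with
  | empty => simp
  | insert m s hm ih =>
    rw [Finset.prod_insert hm]
    obtain ⟨g, hg⟩ := ih fun i hi => hs i (Finset.mem_insert_of_mem hi)
    obtain ⟨k, rfl⟩ := Nat.exists_eq_add_of_le (hs m (Finset.mem_insert_self _ _))
    refine ⟨g - X * C (X : QS) ^ (k + 1) * ∏ m ∈ s, (1 - X * C (X : QS) ^ (m + 1)), ?_⟩
    rw [mul_sub, ← hg, map_pow]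
    ring

theorem constantCoeff_rescale_eulerE : constantCoeff (rescale (X : QS) eulerE) = 1 := by
  rw [rescale_eulerE, map_mul, ← coeff_zero_eq_constantCoeff_apply (φ := eulerE), eulerE, coeff_mk]
  simp [qp]

/-- Euler's evaluation of `(zq; q)_∞`, in the form `(zq; q)_∞ * ∑ (zq)ⁿ / (q; q)_n = 1`. -/
theorem toIter_tprod_mul :
    toIter (∏' m : ℕ, (1 - z * q ^ (m + 1))) * rescale (X : QS) eulerE = 1 := by
  set E := rescale (X : QS) eulerE with hE
  set b : QS⟦X⟧ := invOfUnit E 1 with hb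
  have hEb : E * b = 1 := mul_invOfUnit E 1 (by rw [hE, constantCoeff_rescale_eulerE]; rfl)
  have hp : HasProd (fun m : ℕ => 1 - z * q ^ (m + 1)) (toIter.symm b) := by
    refine tendsto_of_coeff fun n m => ?_
    refine (eventually_ge_atTop (Finset.range (m + 1))).mono fun s hs => ?_
    rw [AlgEquiv.apply_symm_apply]
    have h1 : toIter (∏ i ∈ s, (1 - z * q ^ (i + 1)))
        = ∏ i ∈ s, (1 - X * C (X : QS) ^ (i + 1)) := by
      simp only [map_prod, map_sub, map_one, map_mul, map_pow, toIter_z, toIter_q]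
    have h2 : C ((X : QS) ^ (m + 1)) ∣ ∏ i ∈ s, (1 - X * C (X : QS) ^ (i + 1)) - b := by
      obtain ⟨g, hg⟩ := dvd_prod_sub_one (m + 1) (s \ Finset.range (m + 1)) (by simp)
      obtain ⟨k, hk⟩ := dvd_rescale_sub_one constantCoeff_rescale_eulerE (m + 1)
      rw [rescale_pow_eulerE, ← hE] at hk
      rw [← Finset.prod_sdiff hs]
      set A := ∏ i ∈ s \ Finset.range (m + 1), (1 - X * C (X : QS) ^ (i + 1))
      set B := ∏ i ∈ Finset.range (m + 1), (1 - X * C (X : QS) ^ (i + 1))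
      refine ⟨b * (g * (B * E) + k), ?_⟩
      linear_combination b * B * E * hg + b * hk - A * B * hEb
    obtain ⟨g, hg⟩ := h2
    rw [h1, ← sub_eq_zero, ← map_sub, ← map_sub, hg, coeff_C_mul, coeff_X_pow_mul',
      if_neg (by omega)]
  rw [hp.tprod_eq, AlgEquiv.apply_symm_apply, mul_comm, hEb]

/-! ### The quadruple sum -/

theorem toIter_qPoch (n : ℕ) : toIter (qPoch n) = C (qp (X : QS) n) := by
  simp only [qPoch, qp, map_prod, map_sub, map_one, map_pow, toIter_q]

theorem constantCoeff_qPoch (n : ℕ) : MvPowerSeries.constantCoeff (qPoch n) ≠ 0 := by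
  simp [qPoch, q, map_prod]

theorem toIter_inv {p : MvPowerSeries (Fin 2) ℚ} {g : QS}
    (hp : MvPowerSeries.constantCoeff p ≠ 0) (hg : constantCoeff g ≠ 0) (h : toIter p = C g) :
    toIter p⁻¹ = C g⁻¹ := by
  have h1 : toIter p⁻¹ * C g = 1 := by
    rw [← h, ← map_mul, MvPowerSeries.inv_mul_cancel _ hp, map_one]
  have h2 : C g * C g⁻¹ = (1 : QS⟦X⟧) := by
    rw [← map_mul, PowerSeries.mul_inv_cancel _ hg, map_one]
  exact left_inv_eq_right_inv h1 h2

theorem toIter_qBinom {m k : ℕ} (h : k ≤ m) :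
    toIter (qBinom m k) = C (qp (X : QS) m * ((qp X k)⁻¹ * (qp X (m - k))⁻¹)) := by
  have hg : constantCoeff (qp (X : QS) k * qp X (m - k)) ≠ 0 := by
    rw [map_mul]
    exact mul_ne_zero (qp_ne_zero _) (qp_ne_zero _)
  rw [qBinom, if_pos h, map_mul, toIter_qPoch, toIter_inv (g := qp X k * qp X (m - k)) _ hg,
    ← map_mul, PowerSeries.mul_inv_rev, mul_comm (qp X (m - k))⁻¹]
  · rw [map_mul, toIter_qPoch, toIter_qPoch, map_mul]
  · rw [map_mul]
    exact mul_ne_zero (constantCoeff_qPoch _) (constantCoeff_qPoch _)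

/-- The summand of the quadruple sum. -/
def quadTerm (n₁ n₂ n₃ n₄ : ℕ) : MvPowerSeries (Fin 2) ℚ :=
  z ^ n₁ * q ^ (n₁ ^ 2 + n₂ ^ 2 + n₃ ^ 2 + n₄ ^ 2 + n₂ * n₄ - n₁ * n₂)
    * (qPoch n₁)⁻¹ * qBinom n₁ n₂ * qBinom n₁ n₄ * qBinom n₂ n₃

theorem toIter_quadTerm (n x y w : ℕ) (hx : x ≤ n) (hw : w ≤ n) :
    toIter (quadTerm n x y w) = X ^ n * C (if y ≤ x then
      (X : QS) ^ (n ^ 2 + x ^ 2 + y ^ 2 + w ^ 2 + x * w - n * x + (0 * n + 0 * x + 0 * y + 0 * w))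
        * (qp X n * (qp X (n - x))⁻¹ * (qp X w)⁻¹ * (qp X (n - w))⁻¹ * (qp X y)⁻¹
          * (qp X (x - y))⁻¹) else 0) := by
  split_ifs with hy
  · have h1 := PowerSeries.mul_inv_cancel _ (qp_ne_zero n)
    have h2 := PowerSeries.mul_inv_cancel _ (qp_ne_zero x)
    simp only [quadTerm, map_mul toIter, map_pow toIter, toIter_z, toIter_q, toIter_qBinom hx,
      toIter_qBinom hw, toIter_qBinom hy,
      toIter_inv (constantCoeff_qPoch n) (qp_ne_zero n) (toIter_qPoch n)]
    simp only [mul_assoc, ← map_mul, ← map_pow]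
    congr 2
    simp only [zero_mul, add_zero]
    linear_combination (X ^ (n ^ 2 + x ^ 2 + y ^ 2 + w ^ 2 + x * w - n * x)
      * (qp X n * (qp X (n - x))⁻¹ * (qp X w)⁻¹ * (qp X (n - w))⁻¹ * (qp X y)⁻¹
          * (qp X (x - y))⁻¹)) * (h1 * (qp X x * (qp X x)⁻¹) + h2)
  · have : qBinom x y = 0 := if_neg hy
    simp [quadTerm, this]

theorem quadTerm_eq_zero {n x y w : ℕ} (h : ¬ (x ≤ n ∧ y ≤ n ∧ w ≤ n)) : quadTerm n x y w = 0 := by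
  have h0 : qBinom n x = 0 ∨ qBinom n w = 0 ∨ qBinom x y = 0 := by
    by_cases hx : x ≤ n
    · by_cases hw : w ≤ n
      · exact Or.inr (Or.inr (if_neg fun hy => h ⟨hx, hy.trans hx, hw⟩))
      · exact Or.inr (Or.inl (if_neg hw))
    · exact Or.inl (if_neg hx)
  rcases h0 with h0 | h0 | h0 <;> simp [quadTerm, h0]

theorem toIter_tsum_quadTerm :
    toIter (∑' n : ℕ × ℕ × ℕ × ℕ, quadTerm n.1 n.2.1 n.2.2.1 n.2.2.2) = TA 0 0 0 0 := by
  refine tsum_eq_of_coeff fun n m => ?_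
  refine ⟨{n} ×ˢ Finset.range (n + 1) ×ˢ Finset.range (n + 1) ×ˢ Finset.range (n + 1), ?_, ?_⟩
  · rintro ⟨k, x, y, w⟩ h
    by_cases hk : x ≤ k ∧ y ≤ k ∧ w ≤ k
    · have hkn : k ≠ n := by
        rintro rfl
        refine h ?_
        simp only [Finset.mem_product, Finset.mem_singleton, Finset.mem_range, Nat.lt_succ_iff]
        exact ⟨trivial, hk⟩
      rw [toIter_quadTerm _ _ _ _ hk.1 hk.2.2, mul_comm, coeff_C_mul, coeff_X_pow,
        if_neg hkn.symm, mul_zero, map_zero]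
    · simp only [quadTerm_eq_zero hk, map_zero]
  · rw [Finset.sum_product, Finset.sum_singleton, TA, coeff_mk, map_sum]
    refine Finset.sum_congr rfl ?_
    rintro ⟨x, y, w⟩ h
    simp only [Finset.mem_product, Finset.mem_range] at h
    rw [toIter_quadTerm n x y w (by omega) (by omega), mul_comm, coeff_C_mul, coeff_X_pow,
      if_pos rfl, mul_one]

end Final

/-- The z-refined quadruple-sum identity for the profile `(2,2,1)`. -/
theorem cylG_221 :
    cylG 3 ![2, 2, 1] z
      = ∑' n : ℕ × ℕ × ℕ × ℕ,
          (fun n₁ n₂ n₃ n₄ : ℕ =>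
            z ^ n₁ * q ^ (n₁ ^ 2 + n₂ ^ 2 + n₃ ^ 2 + n₄ ^ 2 + n₂ * n₄ - n₁ * n₂)
              * (qPoch n₁)⁻¹ * qBinom n₁ n₂ * qBinom n₁ n₄ * qBinom n₂ n₃)
          n.1 n.2.1 n.2.2.1 n.2.2.2 := by
  apply toIter.injective
  have h1 := toIter_tprod_mul
  have h2 : (PowerSeries.mk fun n => cylH 2 2 1 n n n) = TA 0 0 0 0 * eulerE :=
    PowerSeries.ext fun n => by rw [PowerSeries.coeff_mk, cylH_221]
  rw [rescale_eulerE] at h1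
  refine Eq.trans ?_ toIter_tsum_quadTerm.symm
  rw [cylG, map_mul, toIter_cylGF, h2]
  linear_combination TA 0 0 0 0 * h1
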